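/- Let C ⊂ ℙ² be a plane curve of degree d ≥ 2 defined over a finite field 𝔽_q of characteristic p by a homogeneous polynomial F ∈ 𝔽_q[x,y,z] of degree d that is irreducible over 𝔽_q. If p > d and q ≥ d²(d-1)⁶, then C is not tangent-filling over 𝔽_q. -/

import Mathlib

/-!
Suppose the `N` tangent lines at smooth points fill the plane over a field with `q` elements.
The tangent line at `Q` contains `P` iff `Q` lies on the polar of `P`, a form of degree `d - 1`.
If that form were zero then, as `p > d`, the curve would contain the line joining `P` to a smooth
point. Hence by Bézout each of the `q ^ 2 + q + 1` points `P` lies on some number `m P` of tangent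
lines with `1 ≤ m P ≤ D := d * (d - 1)`. Any two lines meet, so summing
`(m P - 1) * (D - m P) ≥ 0` over `P` gives
`N * (N - 1) ≤ D * (N * (q + 1) - (q ^ 2 + q + 1))`.
For `d = 2` no `N` satisfies this. For `d ≥ 3` it forces `N` above roughly `(D - 1) * q / (D - 2)`.

Stepanov's method contradicts this. Write `q = κ * r ^ 2` with `r` a power of `p` and `κ ∈ {1, p}`.
Counting coefficients produces an auxiliary form `∑ β * a ^ r * b ^ q`, not divisible by `F`, that
vanishes to order `⌊√κ⌋ * r` along the formal branch of the curve at every smooth affine point but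
one: on such a branch `b ^ q` is constant up to order `q`, and at a rational point this constant is
the value of `b`, so the vanishing only involves the first `⌊√κ⌋` tangential derivatives of `a`.
At the remaining point the products `a ^ r * b ^ q` have distinct orders, so that their nontrivial
combinations do not vanish on the curve. Bézout then bounds `N` by `q + O(√q)`, with a constant
polynomial in `d`. Dimensions of spaces of forms and of their restrictions to branches take the
place of Riemann–Roch and of intersection theory.
-/

open MvPolynomial

/-- `Q` is a smooth point (given by a nonzero coordinate representative) of the plane
curve defined by the homogeneous polynomial `F`. -/
def SmoothPoint {K : Type*} [CommRing K] (F : MvPolynomial (Fin 3) K) (Q : Fin 3 → K) : Prop :=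
  Q ≠ 0 ∧ eval Q F = 0 ∧ ∃ i : Fin 3, eval Q (pderiv i F) ≠ 0

/-- The point with coordinates `P` lies on the tangent line to the curve `{F = 0}` at the
point with coordinates `Q`. -/
def OnTangentLine {K : Type*} [CommRing K] (F : MvPolynomial (Fin 3) K) (Q P : Fin 3 → K) : Prop :=
  eval Q (pderiv 0 F) * P 0 + eval Q (pderiv 1 F) * P 1 + eval Q (pderiv 2 F) * P 2 = 0

/-- The curve `{F = 0}` is tangent-filling: every point of the projective plane lies on the
tangent line at some smooth point of the curve. -/
def TangentFilling {K : Type*} [CommRing K] (F : MvPolynomial (Fin 3) K) : Prop :=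
  ∀ P : Fin 3 → K, P ≠ 0 → ∃ Q : Fin 3 → K, SmoothPoint F Q ∧ OnTangentLine F Q P

open scoped PowerSeries

section PowerSeries

theorem eq_zero_of_X_pow_dvd_sum_smul {K ι : Type*} [Field K] {s : Finset ι} {o : ι → ℕ}
    (ho : Set.InjOn o s) {f : ι → K⟦X⟧} (hf : ∀ i ∈ s, (f i).order = o i) {c : ι → K} {e : ℕ}
    (hdvd : (PowerSeries.X : K⟦X⟧) ^ e ∣ ∑ i ∈ s, c i • f i) {i : ι} (hi : i ∈ s) (hie : o i < e) :
    c i = 0 := by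
  induction hn : o i using Nat.strong_induction_on generalizing i with
  | _ n ih =>
    subst hn
    have hcoeff := PowerSeries.X_pow_dvd_iff.mp hdvd (o i) hie
    rw [map_sum, Finset.sum_eq_single_of_mem i hi] at hcoeff
    · have hlead := (PowerSeries.order_eq_nat.mp (hf i hi)).1
      simpa [hlead] using hcoeff
    · intro j hj hji
      rcases lt_trichotomy (o j) (o i) with hlt | heq | hgt
      · simp [ih (o j) hlt hj (hlt.trans hie) rfl]
      · exact absurd (ho hj hi heq) hji
      · simp [(PowerSeries.order_eq_nat.mp (hf j hj)).2 (o i) hgt]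

theorem finrank_le_card_of_order_mem {K : Type*} [Field K] {U : Submodule K K⟦X⟧} {I : Finset ℕ}
    (hI : ∀ f ∈ U, f ≠ 0 → f.order.toNat ∈ I) : Module.finrank K U ≤ I.card := by
  let coeffs : U →ₗ[K] (I → K) :=
    LinearMap.pi fun i => PowerSeries.coeff (R := K) (i : ℕ) ∘ₗ U.subtype
  have hinj : Function.Injective coeffs := by
    rw [← LinearMap.ker_eq_bot, LinearMap.ker_eq_bot']
    rintro ⟨f, hf⟩ hcoeffs
    by_contra hne
    have hf0 : f ≠ 0 := fun h => hne (Subtype.ext h)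
    exact PowerSeries.coeff_order hf0 (congrFun hcoeffs ⟨_, hI f hf hf0⟩)
  simpa using LinearMap.finrank_le_finrank_of_injective hinj

theorem X_pow_succ_dvd_eval_newton_step {R : Type*} [CommRing R] {G : Polynomial R⟦X⟧}
    {s : R⟦X⟧} {c : R} (hc : PowerSeries.constantCoeff (G.derivative.eval s) * c = 1)
    {n : ℕ} (hn : n ≠ 0) (hs : (PowerSeries.X : R⟦X⟧) ^ n ∣ G.eval s) :
    (PowerSeries.X : R⟦X⟧) ^ (n + 1) ∣ G.eval (s - PowerSeries.C c * G.eval s) := by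
  obtain ⟨k, hk⟩ := G.binomExpansion s (-(PowerSeries.C c * G.eval s))
  have hlin : (PowerSeries.X : R⟦X⟧) ∣ 1 - G.derivative.eval s * PowerSeries.C c := by
    simp [PowerSeries.X_dvd_iff, hc]
  have hquad : (PowerSeries.X : R⟦X⟧) ^ (n + 1) ∣ G.eval s ^ 2 :=
    (pow_dvd_pow _ (by omega : n + 1 ≤ n * 2)).trans
      (by simpa [pow_mul] using pow_dvd_pow_of_dvd hs 2)
  have htaylor : G.eval (s - PowerSeries.C c * G.eval s) =
      G.eval s * (1 - G.derivative.eval s * PowerSeries.C c) +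
        k * PowerSeries.C c ^ 2 * G.eval s ^ 2 := by
    rw [sub_eq_add_neg, hk]
    ring
  rw [htaylor]
  exact dvd_add (mul_dvd_mul hs hlin) (hquad.mul_left _)

theorem exists_forall_X_pow_dvd_sub {R : Type*} [CommRing R] {u : ℕ → R⟦X⟧}
    (hu : ∀ n, (PowerSeries.X : R⟦X⟧) ^ (n + 1) ∣ u (n + 1) - u n) :
    ∃ s, ∀ n, (PowerSeries.X : R⟦X⟧) ^ (n + 1) ∣ s - u n := by
  have hcauchy : ∀ m n, m ≤ n → (PowerSeries.X : R⟦X⟧) ^ (m + 1) ∣ u n - u m := by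
    intro m n hmn
    induction n, hmn using Nat.le_induction with
    | base => simp
    | succ n hmn ih =>
      have := dvd_add ((pow_dvd_pow _ (by omega)).trans (hu n)) ih
      rwa [sub_add_sub_cancel] at this
  refine ⟨PowerSeries.mk fun n => PowerSeries.coeff n (u n),
    fun n => PowerSeries.X_pow_dvd_iff.mpr fun m hm => ?_⟩
  have := PowerSeries.X_pow_dvd_iff.mp (hcauchy m n (by omega)) m (by omega)
  rw [map_sub, sub_eq_zero] at this ⊢
  rw [PowerSeries.coeff_mk, this]

theorem exists_eval_eq_zero_of_isUnit_derivative {R : Type*} [CommRing R] {G : Polynomial R⟦X⟧}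
    {a : R} (h0 : PowerSeries.constantCoeff (G.eval (PowerSeries.C a)) = 0)
    (h1 : IsUnit (PowerSeries.constantCoeff (G.derivative.eval (PowerSeries.C a)))) :
    ∃ s, PowerSeries.constantCoeff s = a ∧ G.eval s = 0 := by
  obtain ⟨c, hc⟩ := h1.exists_right_inv
  let u : ℕ → R⟦X⟧ := fun n => n.rec (PowerSeries.C a) fun _ s => s - PowerSeries.C c * G.eval s
  have hsucc : ∀ n, u (n + 1) = u n - PowerSeries.C c * G.eval (u n) := fun _ => rfl
  have hu : ∀ n, PowerSeries.constantCoeff (u n) = a ∧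
      (PowerSeries.X : R⟦X⟧) ^ (n + 1) ∣ G.eval (u n) := by
    intro n
    induction n with
    | zero => simpa [u, PowerSeries.X_dvd_iff] using h0
    | succ n ih =>
      have hX : PowerSeries.constantCoeff (G.eval (u n)) = 0 :=
        PowerSeries.X_dvd_iff.mp ((dvd_pow_self _ n.succ_ne_zero).trans ih.2)
      have hder : PowerSeries.constantCoeff (G.derivative.eval (u n)) * c = 1 := by
        have hsub : (PowerSeries.X : R⟦X⟧) ∣ u n - PowerSeries.C a := by
          simp [PowerSeries.X_dvd_iff, ih.1]
        have := PowerSeries.X_dvd_iff.mp (hsub.trans (Polynomial.sub_dvd_eval_sub _ _ G.derivative))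
        rw [map_sub, sub_eq_zero] at this
        rw [this, hc]
      exact ⟨by simp [hsucc, hX, ih.1], X_pow_succ_dvd_eval_newton_step hder n.succ_ne_zero ih.2⟩
  obtain ⟨s, hs⟩ := exists_forall_X_pow_dvd_sub (u := u) fun n => by
    simpa [hsucc] using (hu n).2.mul_left (PowerSeries.C c)
  refine ⟨s, ?_, ?_⟩
  · have := PowerSeries.X_dvd_iff.mp ((dvd_pow_self _ one_ne_zero).trans (hs 0))
    rwa [map_sub, (hu 0).1, sub_eq_zero] at this
  · ext n
    have hn := dvd_add ((hs n).trans (Polynomial.sub_dvd_eval_sub s (u n) G)) (hu n).2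
    rw [sub_add_cancel] at hn
    simpa using PowerSeries.X_pow_dvd_iff.mp hn n n.lt_succ_self

end PowerSeries

section Forms

theorem derivation_aeval {σ R A M : Type*} [Fintype σ] [CommSemiring R] [CommSemiring A]
    [Algebra R A] [AddCommMonoid M] [Module R M] [Module A M]
    (D : Derivation R A M) (y : σ → A) (h : MvPolynomial σ R) :
    D (aeval y h) = ∑ i, aeval y (pderiv i h) • D (y i) := by
  induction h using MvPolynomial.induction_on with
  | C r => simp
  | add p q hp hq => simp [hp, hq, add_smul, Finset.sum_add_distrib]
  | mul_X p j hp =>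
    classical
    have hX (i : σ) : aeval y (pderiv i (X j : MvPolynomial σ R)) = if i = j then 1 else 0 := by
      by_cases hij : i = j <;> simp [pderiv_X, hij]
    simp only [map_mul, aeval_X, Derivation.leibniz, hp, smul_eq_mul, map_add, hX, mul_ite, mul_one,
      mul_zero, add_smul, ite_smul, zero_smul, Finset.sum_add_distrib, Finset.sum_ite_eq',
      Finset.mem_univ, if_true, Finset.smul_sum, mul_smul]

theorem eval_smul_of_isHomogeneous {σ R : Type*} [CommSemiring R]
    {F : MvPolynomial σ R} {n : ℕ} (hF : F.IsHomogeneous n) (c : R) (x : σ → R) :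
    eval (c • x) F = c ^ n * eval x F := by
  rw [eval_eq, eval_eq, Finset.mul_sum]
  refine Finset.sum_congr rfl fun m hm => ?_
  rw [hF.degree_eq_sum_deg_support hm, ← Finset.prod_pow_eq_pow_sum]
  simp only [Pi.smul_apply, smul_eq_mul, mul_pow, Finset.prod_mul_distrib]
  ring

theorem isHomogeneous_of_isHomogeneous_mul {σ R : Type*} [CommRing R] [IsDomain R]
    {F c : MvPolynomial σ R} {d n : ℕ} (hF : F.IsHomogeneous d) (hF0 : F ≠ 0)
    (h : (F * c).IsHomogeneous (d + n)) : c.IsHomogeneous n := by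
  let _ : GradedRing (homogeneousSubmodule σ R) := gradedAlgebra
  have hcomp : homogeneousComponent (d + n) (F * c) = F * homogeneousComponent n c := by
    rw [← decomposition.decompose'_apply, ← decomposition.decompose'_apply]
    exact DirectSum.coe_decompose_mul_add_of_left_mem (homogeneousSubmodule σ R) hF
  rw [homogeneousComponent_eq_self h] at hcomp
  rw [mul_left_cancel₀ hF0 hcomp]
  exact homogeneousComponent_isHomogeneous n c

theorem not_dvd_of_isHomogeneous_of_lt {σ R : Type*} [CommRing R] [IsDomain R]
    {F h : MvPolynomial σ R} {d n : ℕ} (hF : F.IsHomogeneous d) (hh : h.IsHomogeneous n)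
    (h0 : h ≠ 0) (hn : n < d) : ¬ F ∣ h := by
  intro hdvd
  have hle := totalDegree_le_of_dvd_of_isDomain hdvd h0
  rw [hF.totalDegree (ne_zero_of_dvd_ne_zero h0 hdvd), hh.totalDegree h0] at hle
  omega

theorem finrank_homogeneousSubmodule (σ R : Type*) [Fintype σ] [CommRing R] [Nontrivial R] (n : ℕ) :
    Module.finrank R (homogeneousSubmodule σ R n) = (Fintype.card σ + n - 1).choose n := by
  classical
  have hexp : {m : σ →₀ ℕ | m.degree = n} =
      ↑(Finset.finsuppAntidiag (Finset.univ : Finset σ) n) := by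
    ext m
    simp [Finset.mem_finsuppAntidiag, Finsupp.degree_eq_sum]
  rw [homogeneousSubmodule_eq_finsupp_supported,
    (AddMonoidAlgebra.supportedEquivFinsupp {m : σ →₀ ℕ | m.degree = n}).finrank_eq, hexp,
    Module.finrank_finsupp_self]
  simp [Finset.card_finsuppAntidiag_nat_eq_choose]

theorem finrank_homogeneousSubmodule_fin_three (R : Type*) [CommRing R] [Nontrivial R] (n : ℕ) :
    Module.finrank R (homogeneousSubmodule (Fin 3) R n) = (n + 2).choose 2 := by
  rw [finrank_homogeneousSubmodule, Fintype.card_fin, show 3 + n - 1 = n + 2 by omega]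
  exact Nat.choose_symm_add

theorem two_mul_add_two_choose_two (n : ℕ) : 2 * (n + 2).choose 2 = (n + 2) * (n + 1) := by
  rw [Nat.choose_two_right, Nat.mul_div_cancel' (Nat.even_mul_pred_self (n + 2)).two_dvd]
  rfl

theorem finrank_map_mulLeft {R A : Type*} [CommRing R] [CommRing A] [IsDomain A] [Algebra R A]
    (V : Submodule R A) {p : A} (hp : p ≠ 0) :
    Module.finrank R (V.map (LinearMap.mulLeft R p)) = Module.finrank R V :=
  (Submodule.equivMapOfInjective _ (mul_right_injective₀ hp) V).finrank_eq.symm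

end Forms

section Branches

variable {σ K : Type*} [Field K]

/-- A formal branch `Y` of the projective hypersurface `F = 0` at the point with coordinates `Q`:
homogeneous coordinates in `K⟦X⟧` solving `F = 0`, specialising to `Q`, and for which some linear
form is a uniformiser, so that orders of forms along `Y` are intersection multiplicities. -/
structure IsBranch (F : MvPolynomial σ K) (Q : σ → K) (Y : σ → K⟦X⟧) : Prop where
  constantCoeff_eq : ∀ i, PowerSeries.constantCoeff (Y i) = Q i
  aeval_eq_zero : aeval Y F = 0
  ne_zero : Q ≠ 0
  exists_order_eq_one : ∃ l : MvPolynomial σ K, l.IsHomogeneous 1 ∧ (aeval Y l).order = 1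

theorem constantCoeff_aeval {R : Type*} [CommRing R] {Q : σ → R} {Y : σ → R⟦X⟧}
    (hY : ∀ i, PowerSeries.constantCoeff (Y i) = Q i) (h : MvPolynomial σ R) :
    PowerSeries.constantCoeff (aeval Y h) = eval Q h := by
  rw [map_aeval, ← funext hY]
  simp [PowerSeries.algebraMap_eq]

theorem X_dvd_aeval_iff {R : Type*} [CommRing R] {Q : σ → R} {Y : σ → R⟦X⟧}
    (hY : ∀ i, PowerSeries.constantCoeff (Y i) = Q i) (h : MvPolynomial σ R) :
    (PowerSeries.X : R⟦X⟧) ∣ aeval Y h ↔ eval Q h = 0 := by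
  rw [PowerSeries.X_dvd_iff, constantCoeff_aeval hY]

theorem exists_isHomogeneous_one_eval_ne_zero {Q : σ → K} (hQ : Q ≠ 0) :
    ∃ l : MvPolynomial σ K, l.IsHomogeneous 1 ∧ eval Q l ≠ 0 := by
  obtain ⟨k, hk⟩ := Function.ne_iff.mp hQ
  exact ⟨X k, isHomogeneous_X _ _, by simpa using hk⟩

theorem exists_isHomogeneous_one_separating {Q R : σ → K} (hQR : ∀ c : K, Q ≠ c • R)
    (hR : R ≠ 0) :
    ∃ l : MvPolynomial σ K, l.IsHomogeneous 1 ∧ eval R l = 0 ∧ eval Q l ≠ 0 := by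
  obtain ⟨k, hk : R k ≠ 0⟩ := Function.ne_iff.mp hR
  obtain ⟨j, hj⟩ := Function.ne_iff.mp (hQR (Q k / R k))
  refine ⟨C (R k) * X j - C (R j) * X k,
    (isHomogeneous_C_mul_X _ _).sub (isHomogeneous_C_mul_X _ _), by simp [mul_comm], ?_⟩
  contrapose hj
  simp only [map_sub, map_mul, eval_C, eval_X] at hj
  simp only [Pi.smul_apply, smul_eq_mul]
  field_simp
  linear_combination hj

namespace IsBranch

variable {F : MvPolynomial σ K} {ι : Type*} [Fintype ι] {Q : ι → σ → K} {Y : ι → σ → K⟦X⟧}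

theorem order_aeval_eq_zero {Q : σ → K} {Y : σ → K⟦X⟧} (hY : IsBranch F Q Y)
    {h : MvPolynomial σ K} (hQ : eval Q h ≠ 0) : (aeval Y h).order = 0 := by
  apply PowerSeries.order_zero_of_unit
  rwa [PowerSeries.isUnit_iff_constantCoeff, constantCoeff_aeval hY.constantCoeff_eq,
    isUnit_iff_ne_zero]

theorem exists_separating_form (hY : ∀ i, IsBranch F (Q i) (Y i))
    (hQ : Pairwise fun i j => ∀ c : K, Q i ≠ c • Q j) (e : ι → ℕ) (i : ι) :
    ∃ s : MvPolynomial σ K, s.IsHomogeneous (∑ j, e j) ∧ eval (Q i) s ≠ 0 ∧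
      ∀ j ≠ i, (PowerSeries.X : K⟦X⟧) ^ e j ∣ aeval (Y j) s := by
  have hsep : ∀ j, ∃ l : MvPolynomial σ K, l.IsHomogeneous 1 ∧ eval (Q i) l ≠ 0 ∧
      (j ≠ i → eval (Q j) l = 0) := by
    intro j
    by_cases hj : j = i
    · obtain ⟨l, hl, hli⟩ := exists_isHomogeneous_one_eval_ne_zero (hY i).ne_zero
      exact ⟨l, hl, hli, fun h => absurd hj h⟩
    · obtain ⟨l, hl, hlj, hli⟩ :=
        exists_isHomogeneous_one_separating (hQ (Ne.symm hj)) (hY j).ne_zero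
      exact ⟨l, hl, hli, fun _ => hlj⟩
  choose l hl hli hlj using hsep
  refine ⟨∏ j, l j ^ e j, ?_, ?_, ?_⟩
  · exact IsHomogeneous.prod _ _ _ fun j _ => by simpa using (hl j).pow (e j)
  · simp [map_prod, Finset.prod_ne_zero_iff, hli]
  · intro j hj
    rw [map_prod]
    refine dvd_trans ?_ (Finset.dvd_prod_of_mem _ (Finset.mem_univ j))
    rw [map_pow]
    exact pow_dvd_pow_of_dvd ((X_dvd_aeval_iff (hY j).constantCoeff_eq _).mpr (hlj j hj)) _

theorem exists_interpolating_form (hY : ∀ i, IsBranch F (Q i) (Y i))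
    (hQ : Pairwise fun i j => ∀ c : K, Q i ≠ c • Q j) {e : ι → ℕ} {N : ℕ}
    (hN : 2 * ∑ i, e i ≤ N) {i : ι} {m : ℕ} (hm : m < e i) :
    ∃ g : MvPolynomial σ K, g.IsHomogeneous N ∧ (aeval (Y i) g).order = m ∧
      ∀ j ≠ i, (PowerSeries.X : K⟦X⟧) ^ e j ∣ aeval (Y j) g := by
  obtain ⟨l, hl, hlo⟩ := (hY i).exists_order_eq_one
  obtain ⟨u, hu, hui⟩ := exists_isHomogeneous_one_eval_ne_zero (hY i).ne_zero
  obtain ⟨s, hs, hsi, hsj⟩ := exists_separating_form hY hQ e i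
  have hei : e i ≤ ∑ j, e j := Finset.single_le_sum (fun _ _ => Nat.zero_le _) (Finset.mem_univ i)
  refine ⟨l ^ m * s * u ^ (N - m - ∑ j, e j), ?_, ?_, fun j hj => ?_⟩
  · convert ((hl.pow m).mul hs).mul (hu.pow (N - m - ∑ j, e j)) using 1
    omega
  · simp [PowerSeries.order_mul, PowerSeries.order_pow, hlo, (hY i).order_aeval_eq_zero hsi,
      (hY i).order_aeval_eq_zero hui]
  · rw [map_mul, map_mul]
    exact ((hsj j hj).mul_left _).mul_right _

theorem eq_zero_of_forall_X_pow_dvd {e : ι → ℕ} {g : (Σ i, Fin (e i)) → MvPolynomial σ K}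
    (hord : ∀ x, (aeval (Y x.1) (g x)).order = (x.2 : ℕ))
    (hvan : ∀ x, ∀ i ≠ x.1, (PowerSeries.X : K⟦X⟧) ^ e i ∣ aeval (Y i) (g x))
    {c : (Σ i, Fin (e i)) → K}
    (hc : ∀ i, (PowerSeries.X : K⟦X⟧) ^ e i ∣ aeval (Y i) (∑ x, c x • g x)) : c = 0 := by
  classical
  funext ⟨i, m⟩
  have hsum := hc i
  rw [map_sum, Fintype.sum_sigma, ← Finset.add_sum_erase _ _ (Finset.mem_univ i)] at hsum
  have hothers : (PowerSeries.X : K⟦X⟧) ^ e i ∣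
      ∑ j ∈ Finset.univ.erase i, ∑ n, aeval (Y i) (c ⟨j, n⟩ • g ⟨j, n⟩) := by
    refine Finset.dvd_sum fun j hj => Finset.dvd_sum fun n _ => ?_
    rw [map_smul]
    exact dvd_smul_of_dvd _ (hvan ⟨j, n⟩ i (Finset.ne_of_mem_erase hj).symm)
  have hown := (dvd_add_left hothers).mp hsum
  simp only [map_smul] at hown
  exact eq_zero_of_X_pow_dvd_sum_smul Fin.val_injective.injOn (fun n _ => hord ⟨i, n⟩) hown
    (Finset.mem_univ m) m.2

theorem finrank_add_sum_le_of_X_pow_dvd [Finite σ] (hY : ∀ i, IsBranch F (Q i) (Y i))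
    (hQ : Pairwise fun i j => ∀ c : K, Q i ≠ c • Q j) {e : ι → ℕ} {N : ℕ}
    (hN : 2 * ∑ i, e i ≤ N) {W : Submodule K (MvPolynomial σ K)}
    (hWN : W ≤ homogeneousSubmodule σ K N)
    (hW : ∀ h ∈ W, ∀ i, (PowerSeries.X : K⟦X⟧) ^ e i ∣ aeval (Y i) h) :
    Module.finrank K W + ∑ i, e i ≤ Module.finrank K (homogeneousSubmodule σ K N) := by
  have : FiniteDimensional K (homogeneousSubmodule σ K N) :=
    Module.Finite.iff_fg.mpr (homogeneousSubmodule_fg σ K N)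
  choose g hgN hord hvan using fun x : Σ i, Fin (e i) => exists_interpolating_form hY hQ hN x.2.2
  have hli : LinearIndependent K g := Fintype.linearIndependent_iff.mpr fun c hc =>
    congrFun (eq_zero_of_forall_X_pow_dvd hord hvan fun i => by simp [hc])
  have hdisj : Disjoint W (Submodule.span K (Set.range g)) := by
    rw [Submodule.disjoint_def]
    intro h hhW hhg
    obtain ⟨c, rfl⟩ := (Submodule.mem_span_range_iff_exists_fun K).mp hhg
    simp [eq_zero_of_forall_X_pow_dvd hord hvan (hW _ hhW)]
  have hspan : Submodule.span K (Set.range g) ≤ homogeneousSubmodule σ K N :=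
    Submodule.span_le.mpr (Set.range_subset_iff.mpr hgN)
  have := Submodule.finiteDimensional_of_le hWN
  have := Submodule.finiteDimensional_of_le hspan
  calc Module.finrank K W + ∑ i, e i
      = Module.finrank K W + Module.finrank K (Submodule.span K (Set.range g)) := by
        simp [finrank_span_eq_card hli]
    _ = Module.finrank K ↥(W ⊔ Submodule.span K (Set.range g)) := by
        rw [← Submodule.finrank_sup_add_finrank_inf_eq, hdisj.eq_bot, finrank_bot, add_zero]
    _ ≤ Module.finrank K (homogeneousSubmodule σ K N) :=
        Submodule.finrank_mono (sup_le hWN hspan)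

end IsBranch

end Branches

section PlaneCurves

theorem choose_two_add_choose_two {d : ℕ} (hd : d ≠ 0) (n : ℕ) :
    (d + n + 2).choose 2 + (d - 1).choose 2 = (n + 2).choose 2 + d * (d + n) + 1 := by
  obtain ⟨d, rfl⟩ := Nat.exists_eq_succ_of_ne_zero hd
  have : ((d + 1 + n + 2).choose 2 + d.choose 2 : ℚ) =
      (n + 2).choose 2 + (d + 1) * (d + 1 + n) + 1 := by
    simp only [Nat.cast_choose_two]
    push_cast
    ring
  exact_mod_cast this

theorem finrank_add_finrank_le_finrank_sup {σ K : Type*} [Finite σ] [Field K]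
    {F h : MvPolynomial σ K} {d n : ℕ} (hF : F.IsHomogeneous d) (hirr : Irreducible F)
    (hFh : ¬ F ∣ h) (hh : h.IsHomogeneous n) (r : ℕ) :
    Module.finrank K (homogeneousSubmodule σ K (r + d)) +
        Module.finrank K (homogeneousSubmodule σ K (r + n)) ≤
      Module.finrank K ↥((homogeneousSubmodule σ K (r + d)).map (LinearMap.mulLeft K h) ⊔
        (homogeneousSubmodule σ K (r + n)).map (LinearMap.mulLeft K F)) +
      Module.finrank K (homogeneousSubmodule σ K r) := by
  have (m : ℕ) : FiniteDimensional K (homogeneousSubmodule σ K m) :=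
    Module.Finite.iff_fg.mpr (homogeneousSubmodule_fg σ K m)
  have hh0 : h ≠ 0 := by rintro rfl; exact hFh (dvd_zero F)
  have hinf : (homogeneousSubmodule σ K (r + d)).map (LinearMap.mulLeft K h) ⊓
      (homogeneousSubmodule σ K (r + n)).map (LinearMap.mulLeft K F) ≤
      (homogeneousSubmodule σ K r).map (LinearMap.mulLeft K (F * h)) := by
    rintro _ ⟨⟨a, ha, rfl⟩, b, -, hab : F * b = h * a⟩
    obtain ⟨c, rfl⟩ := (hirr.prime.dvd_or_dvd (Dvd.intro b hab)).resolve_left hFh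
    refine ⟨c, isHomogeneous_of_isHomogeneous_mul hF hirr.ne_zero ?_, ?_⟩
    · rwa [SetLike.mem_coe, mem_homogeneousSubmodule, add_comm] at ha
    · simp only [LinearMap.mulLeft_apply]
      ring
  have hle := Submodule.finrank_mono hinf
  rw [finrank_map_mulLeft _ (mul_ne_zero hirr.ne_zero hh0)] at hle
  have hsup := Submodule.finrank_sup_add_finrank_inf_eq
    ((homogeneousSubmodule σ K (r + d)).map (LinearMap.mulLeft K h))
    ((homogeneousSubmodule σ K (r + n)).map (LinearMap.mulLeft K F))
  rw [finrank_map_mulLeft _ hh0, finrank_map_mulLeft _ hirr.ne_zero] at hsup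
  omega

namespace IsBranch

variable {K : Type*} [Field K] {F : MvPolynomial (Fin 3) K} {d : ℕ}

/- Both `h` and `F` generate forms vanishing along the jets; in large degrees these fill a
subspace of codimension `d * n`, while the jets impose independent conditions. -/
theorem sum_le_mul_of_not_dvd {ι : Type*} [Fintype ι] {Q : ι → Fin 3 → K} {Y : ι → Fin 3 → K⟦X⟧}
    (hY : ∀ i, IsBranch F (Q i) (Y i)) (hQ : Pairwise fun i j => ∀ c : K, Q i ≠ c • Q j)
    (hF : F.IsHomogeneous d) (hirr : Irreducible F) {h : MvPolynomial (Fin 3) K} {n : ℕ}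
    (hh : h.IsHomogeneous n) (hFh : ¬ F ∣ h) {e : ι → ℕ}
    (hvan : ∀ i, (PowerSeries.X : K⟦X⟧) ^ e i ∣ aeval (Y i) h) : ∑ i, e i ≤ d * n := by
  set r := 2 * ∑ i, e i with hr
  let V := homogeneousSubmodule (Fin 3) K
  have hVN : (V (r + d)).map (LinearMap.mulLeft K h) ⊔ (V (r + n)).map (LinearMap.mulLeft K F) ≤
      V (r + d + n) := by
    refine sup_le ?_ ?_ <;> rintro _ ⟨a, ha, rfl⟩
    · have hmul := hh.mul ((mem_homogeneousSubmodule _ _).mp ha)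
      rwa [add_comm n] at hmul
    · have hmul := hF.mul ((mem_homogeneousSubmodule _ _).mp ha)
      rwa [show d + (r + n) = r + d + n by ring] at hmul
  have hker : ∀ x ∈ (V (r + d)).map (LinearMap.mulLeft K h) ⊔
      (V (r + n)).map (LinearMap.mulLeft K F), ∀ i,
      (PowerSeries.X : K⟦X⟧) ^ e i ∣ aeval (Y i) x := by
    intro x hx i
    obtain ⟨_, ⟨a, -, rfl⟩, _, ⟨b, -, rfl⟩, rfl⟩ := Submodule.mem_sup.mp hx
    simpa [(hY i).aeval_eq_zero] using (hvan i).mul_right _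
  have hupper := finrank_add_sum_le_of_X_pow_dvd hY hQ (hr.ge.trans (by omega) : _ ≤ r + d + n)
    hVN hker
  have hlower := finrank_add_finrank_le_finrank_sup hF hirr hFh hh r
  simp only [V, finrank_homogeneousSubmodule_fin_three] at hupper hlower
  have hN := two_mul_add_two_choose_two (r + d + n)
  have hrd := two_mul_add_two_choose_two (r + d)
  have hrn := two_mul_add_two_choose_two (r + n)
  have hr0 := two_mul_add_two_choose_two r
  nlinarith

variable {Q : Fin 3 → K} {Y : Fin 3 → K⟦X⟧}

theorem dvd_of_X_pow_dvd (hY : IsBranch F Q Y) (hF : F.IsHomogeneous d) (hirr : Irreducible F)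
    {h : MvPolynomial (Fin 3) K} {n e : ℕ} (hh : h.IsHomogeneous n) (he : d * n < e)
    (hvan : (PowerSeries.X : K⟦X⟧) ^ e ∣ aeval Y h) : F ∣ h := by
  by_contra hFh
  have := sum_le_mul_of_not_dvd (ι := Unit) (fun _ => hY) Subsingleton.pairwise hF hirr hh hFh
    fun _ => hvan
  simp at this
  omega

theorem toNat_order_le_of_not_dvd (hY : IsBranch F Q Y) (hF : F.IsHomogeneous d)
    (hirr : Irreducible F) {h : MvPolynomial (Fin 3) K} {n : ℕ} (hh : h.IsHomogeneous n)
    (hFh : ¬ F ∣ h) : (aeval Y h).order.toNat ≤ d * n := by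
  by_contra! hlt
  exact hFh (hY.dvd_of_X_pow_dvd hF hirr hh hlt PowerSeries.X_pow_order_dvd)

theorem aeval_eq_zero_iff (hY : IsBranch F Q Y) (hF : F.IsHomogeneous d) (hirr : Irreducible F)
    {h : MvPolynomial (Fin 3) K} {n : ℕ} (hh : h.IsHomogeneous n) : aeval Y h = 0 ↔ F ∣ h := by
  refine ⟨fun h0 => hY.dvd_of_X_pow_dvd hF hirr hh (Nat.lt_succ_self _) (h0 ▸ dvd_zero _), ?_⟩
  rintro ⟨c, rfl⟩
  simp [hY.aeval_eq_zero]

theorem finrank_map_aeval_add_finrank (hY : IsBranch F Q Y) (hF : F.IsHomogeneous d)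
    (hirr : Irreducible F) (n : ℕ) :
    Module.finrank K ((homogeneousSubmodule (Fin 3) K (d + n)).map (aeval Y).toLinearMap) +
        Module.finrank K (homogeneousSubmodule (Fin 3) K n) =
      Module.finrank K (homogeneousSubmodule (Fin 3) K (d + n)) := by
  have : FiniteDimensional K (homogeneousSubmodule (Fin 3) K (d + n)) :=
    Module.Finite.iff_fg.mpr (homogeneousSubmodule_fg _ K _)
  let φ := (aeval Y).toLinearMap.domRestrict (homogeneousSubmodule (Fin 3) K (d + n))
  have hker : (LinearMap.ker φ).map (homogeneousSubmodule (Fin 3) K (d + n)).subtype =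
      (homogeneousSubmodule (Fin 3) K n).map (LinearMap.mulLeft K F) := by
    ext x
    constructor
    · rintro ⟨⟨x, hx⟩, hx0, rfl⟩
      obtain ⟨c, rfl⟩ := (hY.aeval_eq_zero_iff hF hirr hx).mp hx0
      exact ⟨c, isHomogeneous_of_isHomogeneous_mul hF hirr.ne_zero hx, rfl⟩
    · rintro ⟨c, hc, rfl⟩
      refine ⟨⟨F * c, hF.mul hc⟩, ?_, rfl⟩
      exact (hY.aeval_eq_zero_iff hF hirr (hF.mul hc)).mpr (dvd_mul_right F c)
  have hrank := LinearMap.finrank_range_add_finrank_ker φ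
  rwa [LinearMap.range_domRestrict, ← Submodule.finrank_map_subtype_eq, hker,
    finrank_map_mulLeft _ hirr.ne_zero] at hrank

theorem exists_forms_of_distinct_order (hY : IsBranch F Q Y) (hF : F.IsHomogeneous d)
    (hirr : Irreducible F) {n : ℕ} (hd : d ≠ 0) (hn : d ≤ n) :
    ∃ (I : Finset ℕ) (a : ℕ → MvPolynomial (Fin 3) K),
      d * n + 1 ≤ I.card + (d - 1).choose 2 ∧
      ∀ i ∈ I, (a i).IsHomogeneous n ∧ (aeval Y (a i)).order = i ∧ i ≤ d * n := by
  classical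
  obtain ⟨m, rfl⟩ := Nat.exists_eq_add_of_le hn
  let I := (Finset.range (d * (d + m) + 1)).filter fun i : ℕ =>
    ∃ a : MvPolynomial (Fin 3) K, a.IsHomogeneous (d + m) ∧ (aeval Y a).order = i
  have hI : ∀ i ∈ I, ∃ a : MvPolynomial (Fin 3) K, a.IsHomogeneous (d + m) ∧
      (aeval Y a).order = i ∧ i ≤ d * (d + m) := by
    intro i hi
    obtain ⟨hle, a, ha, hord⟩ := Finset.mem_filter.mp hi
    exact ⟨a, ha, hord, Nat.lt_succ_iff.mp (Finset.mem_range.mp hle)⟩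
  choose! a ha using hI
  refine ⟨I, a, ?_, ha⟩
  have hcard : Module.finrank K ((homogeneousSubmodule (Fin 3) K (d + m)).map
      (aeval Y).toLinearMap) ≤ I.card := by
    refine finrank_le_card_of_order_mem ?_
    rintro _ ⟨h, hh, rfl⟩ (hne : aeval Y h ≠ 0)
    have hFh : ¬ F ∣ h := fun hdvd => hne ((hY.aeval_eq_zero_iff hF hirr hh).mpr hdvd)
    have hle := hY.toNat_order_le_of_not_dvd hF hirr hh hFh
    exact Finset.mem_filter.mpr ⟨Finset.mem_range.mpr (Nat.lt_succ_iff.mpr hle), h, hh,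
      (PowerSeries.coe_toNat_order hne).symm⟩
  have hdim := hY.finrank_map_aeval_add_finrank hF hirr m
  rw [finrank_homogeneousSubmodule_fin_three, finrank_homogeneousSubmodule_fin_three] at hdim
  have hgenus := choose_two_add_choose_two hd m
  omega

theorem exists_forms_of_distinct_order_ge (hY : IsBranch F Q Y) (hF : F.IsHomogeneous d)
    (hirr : Irreducible F) {n : ℕ} (hd : d ≠ 0) (hn : d ≤ n) (e : ℕ) :
    ∃ (J : Finset ℕ) (b : ℕ → MvPolynomial (Fin 3) K),
      d * n + 1 ≤ J.card + (d - 1).choose 2 + e ∧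
      ∀ j ∈ J, (b j).IsHomogeneous n ∧ (aeval Y (b j)).order = j ∧ e ≤ j := by
  obtain ⟨I, b, hI, hb⟩ := hY.exists_forms_of_distinct_order hF hirr hd hn
  refine ⟨I \ Finset.range e, b, ?_, fun j hj => ?_⟩
  · have := Finset.le_card_sdiff (Finset.range e) I
    rw [Finset.card_range] at this
    omega
  · obtain ⟨hjI, hje⟩ := Finset.mem_sdiff.mp hj
    exact ⟨(hb j hjI).1, (hb j hjI).2.1, by simpa using hje⟩

theorem exists_ne_zero_forall_dvd_sum (hY : IsBranch F Q Y) (hF : F.IsHomogeneous d)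
    (hirr : Irreducible F) {ι κ : Type*} [Fintype ι] [Fintype κ] {n : κ → ℕ}
    {G : κ → ι → MvPolynomial (Fin 3) K} (hG : ∀ k x, (G k x).IsHomogeneous (n k))
    (hcard : ∑ k, (d * n k + 1) < Fintype.card ι) :
    ∃ β : ι → K, β ≠ 0 ∧ ∀ k, F ∣ ∑ x, β x • G k x := by
  let jets : (ι → K) →ₗ[K] ((Σ k, Fin (d * n k + 1)) → K) := LinearMap.pi fun s =>
    PowerSeries.coeff (R := K) s.2 ∘ₗ (aeval Y).toLinearMap ∘ₗ Fintype.linearCombination K (G s.1)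
  have hker : LinearMap.ker jets ≠ ⊥ := LinearMap.ker_ne_bot_of_finrank_lt (by simpa using hcard)
  obtain ⟨β, hβ, hβ0⟩ := (Submodule.ne_bot_iff _).mp hker
  refine ⟨β, hβ0, fun k => hY.dvd_of_X_pow_dvd hF hirr (n := n k) ?_ (Nat.lt_succ_self _) ?_⟩
  · exact IsHomogeneous.sum _ _ _ fun x _ => by
      simpa only [smul_eq_C_mul] using (hG k x).C_mul (β x)
  · exact PowerSeries.X_pow_dvd_iff.mpr fun t ht => congrFun hβ ⟨k, t, ht⟩

end IsBranch

end PlaneCurves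

section SmoothPoints

theorem exists_aeval_update_eq_zero {σ K : Type*} [Finite σ] [DecidableEq σ] [Field K]
    {F : MvPolynomial σ K} {Q : σ → K} {W : σ → K⟦X⟧}
    (hW : ∀ l, PowerSeries.constantCoeff (W l) = Q l) {i : σ} (hQ : eval Q F = 0)
    (hi : eval Q (pderiv i F) ≠ 0) :
    ∃ s, PowerSeries.constantCoeff s = Q i ∧ aeval (Function.update W i s) F = 0 := by
  have := Fintype.ofFinite σ
  set V : σ → Polynomial K⟦X⟧ :=
    Function.update (fun l => Polynomial.C (W l)) i Polynomial.X with hV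
  have eval_aeval (s : K⟦X⟧) (h : MvPolynomial σ K) :
      (aeval V h).eval s = aeval (Function.update W i s) h := by
    rw [← Polynomial.coe_aeval_eq_eval, ← AlgHom.restrictScalars_apply K, comp_aeval_apply]
    congr 2
    ext1 l
    obtain rfl | hl := eq_or_ne l i <;> simp [*]
  have constantCoeff_eval (h : MvPolynomial σ K) :
      PowerSeries.constantCoeff ((aeval V h).eval (PowerSeries.C (Q i))) = eval Q h := by
    rw [eval_aeval, constantCoeff_aeval fun l => ?_]
    obtain rfl | hl := eq_or_ne l i <;> simp [*]
  have derivative_aeval : (aeval V F).derivative = aeval V (pderiv i F) := by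
    refine (derivation_aeval (Polynomial.derivative'.restrictScalars K) V F).trans ?_
    rw [Finset.sum_eq_single i (fun l _ hl => by simp [hV, hl]) (by simp)]
    simp [hV]
  obtain ⟨s, hs, hroot⟩ := exists_eval_eq_zero_of_isUnit_derivative (G := aeval V F) (a := Q i)
    (by rw [constantCoeff_eval, hQ])
    (by rw [derivative_aeval, constantCoeff_eval]; exact hi.isUnit)
  exact ⟨s, hs, by rw [← eval_aeval, hroot]⟩

variable {K : Type*} [Field K] {F : MvPolynomial (Fin 3) K} {Q : Fin 3 → K} {d : ℕ}

theorem IsBranch.exists_of_pderiv_ne_zero (hQ : eval Q F = 0) {i j k : Fin 3} (hij : i ≠ j)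
    (hik : i ≠ k) (hjk : j ≠ k) (hi : eval Q (pderiv i F) ≠ 0) (hk : Q k ≠ 0) :
    ∃ Y, IsBranch F Q Y ∧ Y k = PowerSeries.C (Q k) ∧
      Y j = PowerSeries.C (Q j) + PowerSeries.X := by
  set W : Fin 3 → K⟦X⟧ := Function.update (fun l => PowerSeries.C (Q l)) j
    (PowerSeries.C (Q j) + PowerSeries.X) with hW
  have hWQ (l : Fin 3) : PowerSeries.constantCoeff (W l) = Q l := by
    obtain rfl | hl := eq_or_ne l j <;> simp [*]
  obtain ⟨s, hs, hF⟩ := exists_aeval_update_eq_zero hWQ hQ hi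
  have hYk : Function.update W i s k = PowerSeries.C (Q k) := by simp [hW, hik.symm, hjk.symm]
  have hYj : Function.update W i s j = PowerSeries.C (Q j) + PowerSeries.X := by
    simp [hW, hij.symm]
  refine ⟨Function.update W i s, ⟨fun l => ?_, hF, fun h => hk (congrFun h k),
    C (Q k) * X j - C (Q j) * X k,
    (isHomogeneous_C_mul_X _ _).sub (isHomogeneous_C_mul_X _ _), ?_⟩, hYk, hYj⟩
  · obtain rfl | hl := eq_or_ne l i
    exacts [by simp [hs], by simp [hl, hWQ]]
  · have : aeval (Function.update W i s) (C (Q k) * X j - C (Q j) * X k) =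
        PowerSeries.C (Q k) * PowerSeries.X := by
      simp only [map_sub, map_mul, aeval_C, aeval_X, hYk, hYj, PowerSeries.algebraMap_apply,
        Algebra.algebraMap_self_apply]
      ring
    rw [this, PowerSeries.order_mul, PowerSeries.order_X,
      PowerSeries.order_zero_of_unit (hk.isUnit.map PowerSeries.C), zero_add]

theorem sum_mul_eval_pderiv_eq_zero (hF : F.IsHomogeneous d) (hQ : eval Q F = 0) :
    ∑ i, Q i * eval Q (pderiv i F) = 0 := by
  simpa [hQ] using congrArg (eval Q) hF.sum_X_mul_pderiv

theorem SmoothPoint.exists_isBranch (hQ : SmoothPoint F Q) (hF : F.IsHomogeneous d) :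
    ∃ Y, IsBranch F Q Y := by
  obtain ⟨hQ0, hQF, i, hi⟩ := hQ
  obtain ⟨k, hik, hk⟩ : ∃ k, i ≠ k ∧ Q k ≠ 0 := by
    by_contra! hcon
    have heuler := sum_mul_eval_pderiv_eq_zero hF hQF
    rw [Finset.sum_eq_single i (fun l _ hl => by rw [hcon l hl.symm, zero_mul]) (by simp)] at heuler
    refine hQ0 (funext fun k => ?_)
    obtain rfl | hk := eq_or_ne i k
    exacts [(mul_eq_zero.mp heuler).resolve_right hi, hcon k hk]
  obtain ⟨j, hij, hjk⟩ : ∃ j, i ≠ j ∧ j ≠ k := by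
    clear hk hik hi
    decide +revert
  exact (IsBranch.exists_of_pderiv_ne_zero hQF hij hik hjk hi hk).imp fun _ hY => hY.1

/-- The Hamiltonian derivation of `F` in the coordinates `0` and `1`. It is tangent to the curve
`F = 0`, so that iterating it on forms amounts to differentiating along branches. -/
noncomputable def tangentDerivation (F : MvPolynomial (Fin 3) K) :
    Derivation K (MvPolynomial (Fin 3) K) (MvPolynomial (Fin 3) K) :=
  pderiv 1 F • pderiv 0 - pderiv 0 F • pderiv 1

theorem isHomogeneous_tangentDerivation_iterate {h : MvPolynomial (Fin 3) K} {n : ℕ}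
    (hF : F.IsHomogeneous d) (hd : 2 ≤ d) (hh : h.IsHomogeneous n) (hn : n ≠ 0) (k : ℕ) :
    ((tangentDerivation F)^[k] h).IsHomogeneous (n + k * (d - 2)) := by
  induction k with
  | zero => simpa using hh
  | succ k ih =>
    have hdeg : n + (k + 1) * (d - 2) = (d - 1) + (n + k * (d - 2) - 1) := by
      rw [add_mul, one_mul]; omega
    rw [Function.iterate_succ_apply', hdeg]
    exact (hF.pderiv.mul ih.pderiv).sub (hF.pderiv.mul ih.pderiv)

/-- A branch of the plane curve `F = 0` along which `tangentDerivation F` is differentiation, up to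
a unit. -/
structure IsTangentBranch (F : MvPolynomial (Fin 3) K) (Q : Fin 3 → K) (Y : Fin 3 → K⟦X⟧) : Prop
    extends IsBranch F Q Y where
  exists_unit : ∃ u : K⟦X⟧, IsUnit u ∧ ∀ h, aeval Y (tangentDerivation F h) =
    u * PowerSeries.derivative K (aeval Y h)

theorem derivative_mul_aeval_tangentDerivation {Y : Fin 3 → K⟦X⟧} (hF : aeval Y F = 0)
    (hY : PowerSeries.derivative K (Y 2) = 0) (h : MvPolynomial (Fin 3) K) :
    PowerSeries.derivative K (Y 0) * aeval Y (tangentDerivation F h) =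
        aeval Y (pderiv 1 F) * PowerSeries.derivative K (aeval Y h) ∧
      PowerSeries.derivative K (Y 1) * aeval Y (tangentDerivation F h) =
        -aeval Y (pderiv 0 F) * PowerSeries.derivative K (aeval Y h) := by
  have chain (h : MvPolynomial (Fin 3) K) : PowerSeries.derivative K (aeval Y h) =
      aeval Y (pderiv 0 h) * PowerSeries.derivative K (Y 0) +
        aeval Y (pderiv 1 h) * PowerSeries.derivative K (Y 1) := by
    simpa [Fin.sum_univ_three, hY] using derivation_aeval (PowerSeries.derivative K) Y h
  have hFY := chain F
  rw [hF, map_zero] at hFY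
  simp only [chain h, tangentDerivation, Derivation.sub_apply, Derivation.smul_apply, smul_eq_mul,
    map_sub, map_mul]
  constructor
  · linear_combination aeval Y (pderiv 1 h) * hFY
  · linear_combination -aeval Y (pderiv 0 h) * hFY

theorem SmoothPoint.exists_isTangentBranch (hQ : SmoothPoint F Q) (hF : F.IsHomogeneous d)
    (hQ2 : Q 2 ≠ 0) : ∃ Y, IsTangentBranch F Q Y := by
  obtain ⟨-, hQF, i, hi⟩ := hQ
  have h01 : eval Q (pderiv 1 F) ≠ 0 ∨ eval Q (pderiv 0 F) ≠ 0 := by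
    by_contra! hcon
    have heuler := sum_mul_eval_pderiv_eq_zero hF hQF
    simp only [Fin.sum_univ_three, hcon, mul_zero, zero_add, mul_eq_zero, hQ2, false_or] at heuler
    fin_cases i <;> simp_all
  rcases h01 with h1 | h0
  · obtain ⟨Y, hY, hY2, hY0⟩ := IsBranch.exists_of_pderiv_ne_zero hQF (i := 1) (j := 0) (k := 2)
      (by decide) (by decide) (by decide) h1 hQ2
    refine ⟨Y, hY, aeval Y (pderiv 1 F), ?_, fun h => ?_⟩
    · rw [PowerSeries.isUnit_iff_constantCoeff, constantCoeff_aeval hY.constantCoeff_eq]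
      exact h1.isUnit
    · simpa [hY0] using
        (derivative_mul_aeval_tangentDerivation hY.aeval_eq_zero (by simp [hY2]) h).1
  · obtain ⟨Y, hY, hY2, hY1⟩ := IsBranch.exists_of_pderiv_ne_zero hQF (i := 0) (j := 1) (k := 2)
      (by decide) (by decide) (by decide) h0 hQ2
    refine ⟨Y, hY, -aeval Y (pderiv 0 F), ?_, fun h => ?_⟩
    · rw [IsUnit.neg_iff, PowerSeries.isUnit_iff_constantCoeff,
        constantCoeff_aeval hY.constantCoeff_eq]
      exact h0.isUnit
    · simpa [hY1] using
        (derivative_mul_aeval_tangentDerivation hY.aeval_eq_zero (by simp [hY2]) h).2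

theorem X_pow_dvd_of_X_pow_dvd_derivative {f : K⟦X⟧} {n : ℕ}
    (hn : ∀ m, 0 < m → m ≤ n → (m : K) ≠ 0) (h0 : PowerSeries.constantCoeff f = 0)
    (hf : PowerSeries.X ^ n ∣ PowerSeries.derivative K f) : PowerSeries.X ^ (n + 1) ∣ f := by
  rw [PowerSeries.X_pow_dvd_iff] at hf ⊢
  rintro (_ | m) hm
  · simpa using h0
  · have := hf m (by omega)
    rw [PowerSeries.coeff_derivative, ← Nat.cast_succ] at this
    exact (mul_eq_zero.mp this).resolve_right (hn _ (by omega) (by omega))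

theorem IsTangentBranch.X_pow_dvd_aeval {Y : Fin 3 → K⟦X⟧} (hY : IsTangentBranch F Q Y) {n : ℕ}
    (hn : ∀ m, 0 < m → m < n → (m : K) ≠ 0) {h : MvPolynomial (Fin 3) K}
    (hh : ∀ k < n, eval Q ((tangentDerivation F)^[k] h) = 0) :
    PowerSeries.X ^ n ∣ aeval Y h := by
  induction n generalizing h with
  | zero => simp
  | succ n ih =>
    obtain ⟨u, hu, hder⟩ := hY.exists_unit
    refine X_pow_dvd_of_X_pow_dvd_derivative (fun m h0 hm => hn m h0 (by omega)) ?_ ?_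
    · rw [constantCoeff_aeval hY.constantCoeff_eq]
      exact hh 0 (by omega)
    · rw [← hu.dvd_mul_left, ← hder]
      exact ih (fun m h0 hm => hn m h0 (by omega)) fun k hk => hh (k + 1) (by omega)

end SmoothPoints

section Stepanov

theorem X_pow_card_dvd_pow_card_sub_C {K : Type*} [Field K] [Fintype K] (f : K⟦X⟧) :
    PowerSeries.X ^ Fintype.card K ∣
      f ^ Fintype.card K - PowerSeries.C (PowerSeries.constantCoeff f) := by
  obtain ⟨p, _⟩ := CharP.exists K
  obtain ⟨r, hp, hr⟩ := FiniteField.card K p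
  have := Fact.mk hp
  have := charP_of_injective_algebraMap (algebraMap K K⟦X⟧).injective p
  have hX : PowerSeries.X ∣ f - PowerSeries.C (PowerSeries.constantCoeff f) := by
    simp [PowerSeries.X_dvd_iff]
  have hpow := pow_dvd_pow_of_dvd hX (Fintype.card K)
  rwa [hr, sub_pow_char_pow, ← hr, ← map_pow, FiniteField.pow_card] at hpow

theorem exists_pow_char_pow_eq {K : Type*} [Field K] [Finite K] (p : ℕ) [ExpChar K p] (μ : ℕ)
    (x : K) : ∃ y, y ^ p ^ μ = x :=
  Finite.injective_iff_surjective.mp (iterateFrobenius_inj K p μ) x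

variable {K : Type*} [Field K] {F : MvPolynomial (Fin 3) K} {Q : Fin 3 → K}
  {Y : Fin 3 → K⟦X⟧} {ι : Type*} [Fintype ι] {a b : ι → MvPolynomial (Fin 3) K} {β : ι → K}
  {p : ℕ} [Fact p.Prime] [CharP K p]

theorem IsTangentBranch.X_pow_dvd_aeval_sum_smul (hY : IsTangentBranch F Q Y) {M μ : ℕ} (hM : M ≤ p)
    {γ : ι → K} (hγ : ∀ x, γ x ^ p ^ μ = β x * eval Q (b x))
    (hdvd : ∀ k < M, F ∣ ∑ x, β x • ((tangentDerivation F)^[k] (a x) ^ p ^ μ * b x)) :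
    PowerSeries.X ^ M ∣ aeval Y (∑ x, γ x • a x) := by
  refine hY.X_pow_dvd_aeval (fun n hn hnM h0 => ?_) fun k hk => ?_
  · exact absurd (Nat.le_of_dvd hn ((CharP.cast_eq_zero_iff K p n).mp h0)) (by omega)
  have hQF : eval Q F = 0 := by
    rw [← constantCoeff_aeval hY.constantCoeff_eq, hY.aeval_eq_zero, map_zero]
  have hpow : eval Q ((tangentDerivation F)^[k] (∑ x, γ x • a x)) ^ p ^ μ = 0 := by
    obtain ⟨w, hw⟩ := hdvd k hk
    calc eval Q ((tangentDerivation F)^[k] (∑ x, γ x • a x)) ^ p ^ μ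
        = eval Q (∑ x, β x • ((tangentDerivation F)^[k] (a x) ^ p ^ μ * b x)) := by
          rw [← Derivation.coeFn_coe, ← Module.End.coe_pow]
          simp only [map_sum, map_smul, smul_eval, map_mul, map_pow, sum_pow_char_pow, mul_pow, hγ]
          exact Finset.sum_congr rfl fun x _ => by ring
      _ = 0 := by rw [hw, map_mul, hQF, zero_mul]
  exact eq_zero_of_pow_eq_zero hpow

variable [Fintype K]

/-- The auxiliary form of Stepanov's method, built from forms `a x` and `b x`; the exponent `π` is
a power of the characteristic. -/
noncomputable def stepanovForm (π : ℕ)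
    (a b : ι → MvPolynomial (Fin 3) K) (β : ι → K) : MvPolynomial (Fin 3) K :=
  ∑ x, β x • (a x ^ π * b x ^ Fintype.card K)

theorem aeval_stepanovForm (Y : Fin 3 → K⟦X⟧) (π : ℕ) :
    aeval Y (stepanovForm π a b β) =
      ∑ x, β x • (aeval Y (a x) ^ π * aeval Y (b x) ^ Fintype.card K) := by
  simp [stepanovForm]

theorem isHomogeneous_stepanovForm {m n : ℕ} (ha : ∀ x, (a x).IsHomogeneous m)
    (hb : ∀ x, (b x).IsHomogeneous n) (π : ℕ) :
    (stepanovForm π a b β).IsHomogeneous (m * π + n * Fintype.card K) :=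
  IsHomogeneous.sum _ _ _ fun x _ => by
    simpa only [smul_eq_C_mul] using (((ha x).pow π).mul ((hb x).pow _)).C_mul (β x)

theorem X_pow_dvd_aeval_stepanovForm {e : ℕ} (hb : ∀ x, PowerSeries.X ^ e ∣ aeval Y (b x))
    (π : ℕ) : PowerSeries.X ^ (Fintype.card K * e) ∣ aeval Y (stepanovForm π a b β) := by
  rw [aeval_stepanovForm, mul_comm, pow_mul]
  exact Finset.dvd_sum fun x _ => dvd_smul_of_dvd _ ((pow_dvd_pow_of_dvd (hb x) _).mul_left _)

theorem IsBranch.not_dvd_stepanovForm (hY : IsBranch F Q Y) {i j : ι → ℕ} {π : ℕ}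
    (hπ : π ≠ 0) (ha : ∀ x, (aeval Y (a x)).order = i x) (hb : ∀ x, (aeval Y (b x)).order = j x)
    (hij : Function.Injective fun x => (i x, j x)) (hi : ∀ x, i x * π < Fintype.card K)
    (hβ : β ≠ 0) : ¬ F ∣ stepanovForm π a b β := by
  rintro ⟨w, hw⟩
  have hzero : aeval Y (stepanovForm π a b β) = 0 := by
    rw [hw, map_mul, hY.aeval_eq_zero, zero_mul]
  rw [aeval_stepanovForm] at hzero
  refine hβ (funext fun x => eq_zero_of_X_pow_dvd_sum_smul (s := Finset.univ)
    (o := fun x => i x * π + j x * Fintype.card K) ?_ ?_ (hzero ▸ dvd_zero _) (Finset.mem_univ x)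
    (Nat.lt_succ_self _))
  · intro x _ y _ (hxy : i x * π + j x * _ = i y * π + j y * _)
    have hmod := congrArg (· % Fintype.card K) hxy
    simp only [Nat.add_mul_mod_self_right, Nat.mod_eq_of_lt (hi _)] at hmod
    rw [hmod, add_right_inj] at hxy
    exact hij (Prod.ext (Nat.eq_of_mul_eq_mul_right (by omega) hmod)
      (Nat.eq_of_mul_eq_mul_right Fintype.card_pos hxy))
  · intro x _
    rw [PowerSeries.order_mul, PowerSeries.order_pow, PowerSeries.order_pow, ha, hb]
    simp [mul_comm]

namespace IsTangentBranch

theorem X_pow_mul_dvd_aeval_stepanovForm (hY : IsTangentBranch F Q Y) {M μ : ℕ} (hM : M ≤ p)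
    (hMq : M * p ^ μ ≤ Fintype.card K)
    (hdvd : ∀ k < M, F ∣ ∑ x, β x • ((tangentDerivation F)^[k] (a x) ^ p ^ μ * b x)) :
    PowerSeries.X ^ (M * p ^ μ) ∣ aeval Y (stepanovForm (p ^ μ) a b β) := by
  have := charP_of_injective_algebraMap (algebraMap K K⟦X⟧).injective p
  choose γ hγ using fun x => exists_pow_char_pow_eq p μ (β x * eval Q (b x))
  have hfrozen : aeval Y (∑ x, γ x • a x) ^ p ^ μ =
      ∑ x, β x • (aeval Y (a x) ^ p ^ μ * PowerSeries.C (eval Q (b x))) := by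
    simp only [map_sum, map_smul, sum_pow_char_pow, smul_pow, hγ]
    refine Finset.sum_congr rfl fun x _ => ?_
    rw [mul_smul, mul_comm, PowerSeries.smul_eq_C_mul (_ ^ _)]
  rw [aeval_stepanovForm, ← sub_add_cancel (∑ x, _) (aeval Y (∑ x, γ x • a x) ^ p ^ μ)]
  refine dvd_add ?_ ?_
  · rw [hfrozen, ← Finset.sum_sub_distrib]
    refine Finset.dvd_sum fun x _ => ?_
    rw [← smul_sub, ← mul_sub, ← constantCoeff_aeval hY.constantCoeff_eq]
    exact dvd_smul_of_dvd _
      (((pow_dvd_pow _ hMq).trans (X_pow_card_dvd_pow_card_sub_C _)).mul_left _)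
  · rw [pow_mul]
    exact pow_dvd_pow_of_dvd (hY.X_pow_dvd_aeval_sum_smul hM hγ hdvd) _

end IsTangentBranch

variable {d : ℕ}

theorem IsBranch.exists_stepanov_form (hY : IsBranch F Q Y) (hF : F.IsHomogeneous d)
    (hirr : Irreducible F) (hd : 2 ≤ d) {L m e M μ : ℕ} (hL : d ≤ L) (hm : d ≤ m) (hM : M ≤ p)
    (hMq : M * p ^ μ ≤ Fintype.card K) (hLq : d * L * p ^ μ < Fintype.card K)
    (hcount : ∑ k ∈ Finset.range M, (d * ((L + k * (d - 2)) * p ^ μ + m) + 1) <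
      (d * L + 1 - (d - 1).choose 2) * (d * m + 1 - (d - 1).choose 2 - e)) :
    ∃ h : MvPolynomial (Fin 3) K, h.IsHomogeneous (L * p ^ μ + m * Fintype.card K) ∧ ¬ F ∣ h ∧
      PowerSeries.X ^ (Fintype.card K * e) ∣ aeval Y h ∧
      ∀ R Z, IsTangentBranch F R Z → PowerSeries.X ^ (M * p ^ μ) ∣ aeval Z h := by
  have hd0 : d ≠ 0 := by omega
  obtain ⟨I, a, hI, ha⟩ := hY.exists_forms_of_distinct_order hF hirr hd0 hL
  obtain ⟨J, b, hJ, hb⟩ := hY.exists_forms_of_distinct_order_ge hF hirr hd0 hm e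
  let a' (x : I × J) := a x.1
  let b' (x : I × J) := b x.2
  have ha' (x : I × J) := ha x.1 x.1.2
  have hb' (x : I × J) := hb x.2 x.2.2
  obtain ⟨β, hβ, hdvd⟩ := hY.exists_ne_zero_forall_dvd_sum hF hirr (κ := Fin M)
    (n := fun k => (L + k * (d - 2)) * p ^ μ + m)
    (G := fun k x => (tangentDerivation F)^[k] (a' x) ^ p ^ μ * b' x)
    (fun k x => ((isHomogeneous_tangentDerivation_iterate hF hd (ha' x).1 (by omega) k).pow _).mul
      (hb' x).1) (by
    rw [Fin.sum_univ_eq_sum_range (fun k => d * ((L + k * (d - 2)) * p ^ μ + m) + 1)]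
    simpa using hcount.trans_le (Nat.mul_le_mul (by omega) (by omega)))
  refine ⟨stepanovForm (p ^ μ) a' b' β,
    isHomogeneous_stepanovForm (fun x => (ha' x).1) (fun x => (hb' x).1) _, ?_, ?_,
    fun R Z hZ => ?_⟩
  · refine hY.not_dvd_stepanovForm (pow_ne_zero _ (Fact.out : p.Prime).ne_zero)
      (fun x => (ha' x).2.1) (fun x => (hb' x).2.1) (fun x y hxy => ?_)
      (fun x => (Nat.mul_le_mul_right _ (ha' x).2.2).trans_lt hLq) hβ
    exact Prod.ext (Subtype.ext (congrArg Prod.fst hxy)) (Subtype.ext (congrArg Prod.snd hxy))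
  · refine X_pow_dvd_aeval_stepanovForm (fun x => ?_) _
    refine (pow_dvd_pow _ (hb' x).2.2).trans ?_
    simpa [(hb' x).2.1] using PowerSeries.X_pow_order_dvd (φ := aeval Y (b x.2))
  · exact hZ.X_pow_mul_dvd_aeval_stepanovForm hM hMq fun k hk => hdvd ⟨k, hk⟩

theorem card_sub_one_mul_add_le (hF : F.IsHomogeneous d)
    (hirr : Irreducible F) (hd : 2 ≤ d) {Q : ι → Fin 3 → K}
    (hQ : Pairwise fun i j => ∀ c : K, Q i ≠ c • Q j) (hsmooth : ∀ i, SmoothPoint F (Q i))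
    (haff : ∀ i, Q i 2 ≠ 0) [Nonempty ι] {L m e M μ : ℕ} (hL : d ≤ L) (hm : d ≤ m) (hM : M ≤ p)
    (hMq : M * p ^ μ ≤ Fintype.card K) (hLq : d * L * p ^ μ < Fintype.card K)
    (hcount : ∑ k ∈ Finset.range M, (d * ((L + k * (d - 2)) * p ^ μ + m) + 1) <
      (d * L + 1 - (d - 1).choose 2) * (d * m + 1 - (d - 1).choose 2 - e)) :
    (Fintype.card ι - 1) * (M * p ^ μ) + Fintype.card K * e ≤
      d * (L * p ^ μ + m * Fintype.card K) := by
  classical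
  choose Y hY using fun i => (hsmooth i).exists_isTangentBranch hF (haff i)
  obtain ⟨i₀⟩ := ‹Nonempty ι›
  obtain ⟨h, hh, hFh, hvan₀, hvan⟩ :=
    (hY i₀).exists_stepanov_form hF hirr hd hL hm hM hMq hLq hcount
  have hbezout := IsBranch.sum_le_mul_of_not_dvd
    (e := Function.update (fun _ => M * p ^ μ) i₀ (Fintype.card K * e))
    (fun i => (hY i).toIsBranch) hQ hF hirr hh hFh fun i => by
      obtain rfl | hi := eq_or_ne i i₀
      exacts [by simpa using hvan₀, by simpa [hi] using hvan _ _ (hY i)]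
  rw [Finset.sum_update_of_mem (Finset.mem_univ _)] at hbezout
  simpa [Finset.card_sdiff, add_comm] using hbezout

end Stepanov

section Polars

/-- The first polar of the hypersurface `F = 0` with respect to the point `v`: it passes through the
smooth points whose tangent space contains `v`. -/
noncomputable def polar {σ R : Type*} [Fintype σ] [CommRing R] (F : MvPolynomial σ R) (v : σ → R) :
    MvPolynomial σ R :=
  ∑ i, C (v i) * pderiv i F

/-- The parametrisation `t ↦ Q + t v` of the line through `Q` and `v`, as a formal arc at `Q`. -/
noncomputable def lineArc {σ K : Type*} [CommRing K] (Q v : σ → K) (i : σ) : K⟦X⟧ :=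
  PowerSeries.C (Q i) + PowerSeries.C (v i) * PowerSeries.X

theorem isHomogeneous_polar {σ R : Type*} [Fintype σ] [CommRing R] {F : MvPolynomial σ R} {d : ℕ}
    (hF : F.IsHomogeneous d) (v : σ → R) : (polar F v).IsHomogeneous (d - 1) :=
  IsHomogeneous.sum _ _ _ fun i _ => hF.pderiv.C_mul (v i)

theorem eval_polar {σ R : Type*} [Fintype σ] [CommRing R] (F : MvPolynomial σ R) (Q v : σ → R) :
    eval Q (polar F v) = v ⬝ᵥ fun i => eval Q (pderiv i F) := by
  simp [polar, dotProduct]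

theorem derivative_aeval_lineArc {σ R : Type*} [Fintype σ] [CommRing R] (Q v : σ → R)
    (F : MvPolynomial σ R) :
    PowerSeries.derivative R (aeval (lineArc Q v) F) = aeval (lineArc Q v) (polar F v) := by
  rw [derivation_aeval, polar, map_sum]
  simp [lineArc, mul_comm]

theorem coeff_aeval_lineArc_eq_zero {σ R : Type*} [CommRing R] {F : MvPolynomial σ R} {d n : ℕ}
    (hF : F.IsHomogeneous d) (hn : d < n) (Q v : σ → R) :
    PowerSeries.coeff n (aeval (lineArc Q v) F) = 0 := by
  let L (i : σ) : Polynomial R := Polynomial.C (Q i) + Polynomial.C (v i) * Polynomial.X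
  have hL : lineArc Q v = fun i => Polynomial.coeToPowerSeries.algHom R (L i) := by
    ext1 i
    simp [L, lineArc, Polynomial.coeToPowerSeries.algHom_apply]
  rw [hL, ← comp_aeval_apply, Polynomial.coeToPowerSeries.algHom_apply]
  have hdeg : (aeval L F).natDegree ≤ d * 1 :=
    aeval_natDegree_le F hF.totalDegree_le L fun i => by simp only [L]; compute_degree
  simpa using Polynomial.coeff_eq_zero_of_natDegree_lt (by omega)

theorem aeval_lineArc_eq_zero {σ K : Type*} [Fintype σ] [Field K] {F : MvPolynomial σ K} {d : ℕ}
    (hF : F.IsHomogeneous d) (hchar : ∀ n, 0 < n → n ≤ d → (n : K) ≠ 0) {Q v : σ → K}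
    (hQ : eval Q F = 0) (hv : polar F v = 0) : aeval (lineArc Q v) F = 0 := by
  have hX : PowerSeries.X ^ (d + 1) ∣ aeval (lineArc Q v) F :=
    X_pow_dvd_of_X_pow_dvd_derivative hchar
      (by rw [constantCoeff_aeval (Q := Q) (fun i => by simp [lineArc]), hQ])
      (by rw [derivative_aeval_lineArc, hv, map_zero]; exact dvd_zero _)
  ext n
  obtain hn | hn := Nat.lt_or_ge d n
  · exact coeff_aeval_lineArc_eq_zero hF hn Q v
  · exact PowerSeries.X_pow_dvd_iff.mp hX n (Nat.lt_succ_of_le hn)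

theorem aeval_lineArc_of_isHomogeneous_one {σ R : Type*} [CommRing R] {l : MvPolynomial σ R}
    (hl : l.IsHomogeneous 1) (Q v : σ → R) :
    aeval (lineArc Q v) l =
      PowerSeries.C (eval Q l) + PowerSeries.C (eval v l) * PowerSeries.X := by
  rw [← mem_homogeneousSubmodule, homogeneousSubmodule_one_eq_span_X] at hl
  induction hl using Submodule.span_induction with
  | mem l hl => obtain ⟨i, rfl⟩ := hl; simp [lineArc]
  | zero => simp
  | add l l' _ _ hl hl' => simp only [map_add, hl, hl']; ring
  | smul c l _ hl =>
    rw [map_smul, hl, smul_eval, smul_eval, map_mul, map_mul, PowerSeries.smul_eq_C_mul]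
    ring

theorem isBranch_lineArc {σ K : Type*} [Field K] {F : MvPolynomial σ K} {Q v : σ → K} (hQ : Q ≠ 0)
    (hv : ∀ c : K, v ≠ c • Q) (hF : aeval (lineArc Q v) F = 0) : IsBranch F Q (lineArc Q v) := by
  obtain ⟨l, hl, hlQ, hlv⟩ := exists_isHomogeneous_one_separating hv hQ
  refine ⟨fun i => by simp [lineArc], hF, hQ, l, hl, ?_⟩
  rw [aeval_lineArc_of_isHomogeneous_one hl, hlQ, map_zero, zero_add, PowerSeries.order_mul,
    PowerSeries.order_X, PowerSeries.order_zero_of_unit, zero_add]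
  simpa using hlv

variable {K : Type*} [Field K] {F : MvPolynomial (Fin 3) K} {d : ℕ}

open Matrix in
theorem exists_isHomogeneous_one_aeval_lineArc_eq_zero {Q v : Fin 3 → K} (hQ : Q ≠ 0)
    (hv : ∀ c : K, v ≠ c • Q) :
    ∃ w : MvPolynomial (Fin 3) K, w.IsHomogeneous 1 ∧ w ≠ 0 ∧ aeval (lineArc Q v) w = 0 := by
  have hcross : Q ⨯₃ v ≠ 0 := crossProduct_ne_zero_iff_linearIndependent.mpr
    ((LinearIndependent.pair_iff' hQ).mpr fun c hc => hv c hc.symm)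
  obtain ⟨i, hi⟩ := Function.ne_iff.mp hcross
  refine ⟨∑ j, C ((Q ⨯₃ v) j) * X j, IsHomogeneous.sum _ _ _ fun j _ => isHomogeneous_C_mul_X _ _,
    fun hw => hi ?_, ?_⟩
  · simpa [Pi.single_apply] using congrArg (eval (Pi.single i 1)) hw
  · simp [lineArc, Fin.sum_univ_three, cross_apply]
    ring

theorem polar_ne_zero_of_not_proportional (hF : F.IsHomogeneous d) (hirr : Irreducible F)
    (hd : 2 ≤ d) (hchar : ∀ n, 0 < n → n ≤ d → (n : K) ≠ 0) {Q v : Fin 3 → K} (hQ0 : Q ≠ 0)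
    (hQ : eval Q F = 0) (hv : ∀ c : K, v ≠ c • Q) : polar F v ≠ 0 := by
  intro hpolar
  have hline := isBranch_lineArc hQ0 hv (aeval_lineArc_eq_zero hF hchar hQ hpolar)
  obtain ⟨w, hw, hw0, hwline⟩ := exists_isHomogeneous_one_aeval_lineArc_eq_zero hQ0 hv
  exact not_dvd_of_isHomogeneous_of_lt hF hw hw0 (by omega)
    ((hline.aeval_eq_zero_iff hF hirr hw).mp hwline)

theorem SmoothPoint.smul {Q : Fin 3 → K} (hQ : SmoothPoint F Q) (hF : F.IsHomogeneous d) {c : K}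
    (hc : c ≠ 0) : SmoothPoint F (c • Q) := by
  obtain ⟨hQ0, hQF, i, hi⟩ := hQ
  exact ⟨smul_ne_zero hc hQ0, by rw [eval_smul_of_isHomogeneous hF, hQF, mul_zero], i, by
    rw [eval_smul_of_isHomogeneous hF.pderiv]; exact mul_ne_zero (pow_ne_zero _ hc) hi⟩

theorem onTangentLine_iff_eval_polar {Q P : Fin 3 → K} :
    OnTangentLine F Q P ↔ eval Q (polar F P) = 0 := by
  rw [eval_polar, dotProduct_comm, Matrix.vec3_dotProduct, OnTangentLine]

theorem OnTangentLine.smul {Q P : Fin 3 → K} (hP : OnTangentLine F Q P) (hF : F.IsHomogeneous d)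
    (c : K) : OnTangentLine F (c • Q) P := by
  rw [onTangentLine_iff_eval_polar] at hP ⊢
  rw [eval_smul_of_isHomogeneous (isHomogeneous_polar hF P), hP, mul_zero]

theorem TangentFilling.polar_ne_zero (hfill : TangentFilling F) (hF : F.IsHomogeneous d)
    (hirr : Irreducible F) (hd : 2 ≤ d) (hchar : ∀ n, 0 < n → n ≤ d → (n : K) ≠ 0)
    {v : Fin 3 → K} (hv : v ≠ 0) : polar F v ≠ 0 := by
  by_cases hex : ∃ Q, SmoothPoint F Q ∧ ∀ c : K, v ≠ c • Q
  · obtain ⟨Q, hQ, hvQ⟩ := hex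
    exact polar_ne_zero_of_not_proportional hF hirr hd hchar hQ.1 hQ.2.1 hvQ
  push Not at hex
  obtain ⟨Q, hQ, -⟩ := hfill v hv
  obtain ⟨c, rfl⟩ := hex Q hQ
  obtain ⟨-, -, i, hi⟩ := hQ.smul hF (left_ne_zero_of_smul hv)
  obtain ⟨R, hR, hRi⟩ := hfill (Pi.single i 1) (by simp)
  obtain ⟨c', hc'⟩ := hex R hR
  have htangent := hc' ▸ hRi.smul hF c'
  rw [onTangentLine_iff_eval_polar, eval_polar] at htangent
  exact absurd (by simpa using htangent) hi

end Polars

section ProjectivePlanes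

open Configuration ProjectivePlane

open scoped Classical in
theorem sum_card_incident_lines {P L ι : Type*} [Membership P L] [ProjectivePlane P L] [Fintype P]
    [Finite L] [Fintype ι] (ℓ : ι → L) :
    ∑ p : P, Finset.card {i | p ∈ ℓ i} = Fintype.card ι * (order P L + 1) := by
  simp only [Finset.card_filter]
  rw [Finset.sum_comm]
  simp only [← Finset.card_filter, ← Fintype.card_subtype, ← Nat.card_eq_fintype_card]
  exact (Finset.sum_congr rfl fun i _ => pointCount_eq P (ℓ i)).trans (by simp)

open scoped Classical in
theorem le_sum_card_incident_lines_sq {P L ι : Type*} [Membership P L] [ProjectivePlane P L]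
    [Fintype P] [Finite L] [Fintype ι] (ℓ : ι → L) :
    Fintype.card ι * (order P L + Fintype.card ι) ≤
      ∑ p : P, Finset.card {i | p ∈ ℓ i} ^ 2 := by
  have hmeet (i j : ι) : (if i = j then order P L else 0) + 1 ≤
      Finset.card {p : P | p ∈ ℓ i ∧ p ∈ ℓ j} := by
    split_ifs with hij
    · rw [hij]
      simp only [and_self, ← Fintype.card_subtype, ← Nat.card_eq_fintype_card]
      exact (pointCount_eq P (ℓ j)).ge
    · rw [zero_add, Nat.one_le_iff_ne_zero, ← Nat.pos_iff_ne_zero, Finset.card_pos]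
      by_cases hl : ℓ i = ℓ j
      · obtain ⟨p, hp⟩ : ∃ p : P, p ∈ ℓ j := by
          have hpos : 0 < pointCount P (ℓ j) := pos_of_gt (two_lt_pointCount P (ℓ j))
          obtain ⟨p, hp⟩ := (Nat.card_pos_iff.mp hpos).1
          exact ⟨p, hp⟩
        exact ⟨p, by simp [hl, hp]⟩
      · exact ⟨HasPoints.mkPoint hl, by simpa using HasPoints.mkPoint_ax hl⟩
  calc Fintype.card ι * (order P L + Fintype.card ι)
      = ∑ i : ι, ∑ j : ι, ((if i = j then order P L else 0) + 1) := by
        simp [Finset.sum_add_distrib]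
    _ ≤ ∑ i : ι, ∑ j : ι, Finset.card {p : P | p ∈ ℓ i ∧ p ∈ ℓ j} :=
        Finset.sum_le_sum fun i _ => Finset.sum_le_sum fun j _ => hmeet i j
    _ = ∑ p : P, Finset.card {i | p ∈ ℓ i} ^ 2 := by
        simp only [Finset.card_filter, sq, Finset.sum_mul_sum, ite_zero_mul_ite_zero, mul_one]
        exact Finset.sum_comm_cycle

open scoped Classical in
theorem card_mul_card_sub_one_le_of_forall_incident {P L ι : Type*} [Membership P L]
    [ProjectivePlane P L] [Finite P] [Finite L] [Fintype ι] {ℓ : ι → L} {D : ℕ}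
    (hcover : ∀ p : P, ∃ i, p ∈ ℓ i) (hD : ∀ p : P, Finset.card {i | p ∈ ℓ i} ≤ D) :
    (Fintype.card ι * (Fintype.card ι - 1) : ℤ) ≤
      D * (Fintype.card ι * (order P L + 1) - (order P L ^ 2 + order P L + 1)) := by
  have := Fintype.ofFinite P
  have hnonneg : 0 ≤ ∑ p : P, ((Finset.card {i | p ∈ ℓ i} : ℤ) - 1) *
      (D - Finset.card {i | p ∈ ℓ i}) := by
    refine Finset.sum_nonneg fun p _ => mul_nonneg (sub_nonneg.mpr ?_) (sub_nonneg.mpr ?_)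
    · obtain ⟨i, hi⟩ := hcover p
      exact_mod_cast Finset.card_pos.mpr ⟨i, by simpa using hi⟩
    · exact_mod_cast hD p
  have hexpand (m : ℤ) : (m - 1) * (D - m) = (D + 1) * m - D - m ^ 2 := by ring
  have hsum : (∑ p : P, Finset.card {i | p ∈ ℓ i} : ℤ) = Fintype.card ι * (order P L + 1) := by
    exact_mod_cast sum_card_incident_lines ℓ
  have hsq : (Fintype.card ι * (order P L + Fintype.card ι) : ℤ) ≤
      ∑ p : P, (Finset.card {i | p ∈ ℓ i} : ℤ) ^ 2 := by
    exact_mod_cast le_sum_card_incident_lines_sq ℓ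
  have hcard : (Fintype.card P : ℤ) = order P L ^ 2 + order P L + 1 := by
    exact_mod_cast card_points P L
  simp only [hexpand, Finset.sum_sub_distrib, ← Finset.mul_sum, hsum, Finset.sum_const,
    Finset.card_univ, nsmul_eq_mul, hcard] at hnonneg
  linarith

end ProjectivePlanes

section TangentLines

open Configuration ProjectivePlane
open scoped LinearAlgebra.Projectivization

variable {K : Type*} [Field K]

theorem order_projectivization [Fintype K] [DecidableEq K] :
    order (ℙ K (Fin 3 → K)) (ℙ K (Fin 3 → K)) = Fintype.card K := by
  have := Fintype.ofFinite (ℙ K (Fin 3 → K))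
  have hcard := Projectivization.card_of_finrank K (Fin 3 → K) (n := 3) (by simp)
  rw [Nat.card_eq_fintype_card, Nat.card_eq_fintype_card,
    card_points (ℙ K (Fin 3 → K)) (ℙ K (Fin 3 → K))] at hcard
  simp only [Finset.sum_range_succ, Finset.sum_range_zero] at hcard
  nlinarith

theorem rep_ne_smul_rep {V : Type*} [AddCommGroup V] [Module K V] {P Q : ℙ K V} (hPQ : P ≠ Q)
    (c : K) : P.rep ≠ c • Q.rep := by
  intro hc
  apply hPQ
  rw [← P.mk_rep, ← Q.mk_rep, Projectivization.mk_eq_mk_iff']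
  exact ⟨c, hc.symm⟩

variable {F : MvPolynomial (Fin 3) K} {d n : ℕ}

theorem card_smoothPoints_le_mul {ι : Type*} [Fintype ι] {Q : ι → Fin 3 → K}
    (hQ : Pairwise fun i j => ∀ c : K, Q i ≠ c • Q j) (hsmooth : ∀ i, SmoothPoint F (Q i))
    (hF : F.IsHomogeneous d) (hirr : Irreducible F) {h : MvPolynomial (Fin 3) K}
    (hh : h.IsHomogeneous n) (hFh : ¬ F ∣ h) (hvan : ∀ i, eval (Q i) h = 0) :
    Fintype.card ι ≤ d * n := by
  choose Y hY using fun i => (hsmooth i).exists_isBranch hF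
  simpa using IsBranch.sum_le_mul_of_not_dvd (e := fun _ => 1) hY hQ hF hirr hh hFh fun i => by
    rw [pow_one, X_dvd_aeval_iff (hY i).constantCoeff_eq, hvan i]

/-- The smooth rational points of the curve `F = 0`, as points of the projective plane. -/
def smoothPoints (F : MvPolynomial (Fin 3) K) : Set (ℙ K (Fin 3 → K)) :=
  {P | SmoothPoint F P.rep}

theorem ncard_smoothPoints_le_ncard_affine_add [Finite K] (hF : F.IsHomogeneous d)
    (hirr : Irreducible F) (hd : 1 < d) :
    (smoothPoints F).ncard ≤ {P ∈ smoothPoints F | P.rep 2 ≠ 0}.ncard + d := by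
  have := Fintype.ofFinite {P ∈ smoothPoints F | P.rep 2 = 0}
  have hinfinity : {P ∈ smoothPoints F | P.rep 2 = 0}.ncard ≤ d * 1 := by
    rw [← Nat.card_coe_set_eq, Nat.card_eq_fintype_card]
    exact card_smoothPoints_le_mul (Q := fun P => P.1.rep)
      (fun P Q hPQ => rep_ne_smul_rep (Subtype.coe_injective.ne hPQ)) (fun P => P.2.1) hF hirr
      (isHomogeneous_X K 2) (not_dvd_of_isHomogeneous_of_lt hF (isHomogeneous_X K 2)
        (X_ne_zero 2) hd)
      fun P => by simpa using P.2.2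
  calc (smoothPoints F).ncard
      ≤ {P ∈ smoothPoints F | P.rep 2 ≠ 0}.ncard + {P ∈ smoothPoints F | P.rep 2 = 0}.ncard := by
        refine (Set.ncard_le_ncard fun P hP => ?_).trans (Set.ncard_union_le _ _)
        exact (em (P.rep 2 = 0)).symm.imp (⟨hP, ·⟩) (⟨hP, ·⟩)
    _ ≤ {P ∈ smoothPoints F | P.rep 2 ≠ 0}.ncard + d := by omega

/-- The tangent line at a smooth point, as a point of the dual plane. -/
noncomputable def SmoothPoint.tangentLine {Q : Fin 3 → K} (hQ : SmoothPoint F Q) :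
    ℙ K (Fin 3 → K) :=
  Projectivization.mk K (fun i => eval Q (pderiv i F)) fun h => by
    obtain ⟨-, -, i, hi⟩ := hQ
    exact hi (congrFun h i)

theorem SmoothPoint.mem_tangentLine_iff {Q : Fin 3 → K} (hQ : SmoothPoint F Q)
    (P : ℙ K (Fin 3 → K)) : P ∈ hQ.tangentLine ↔ OnTangentLine F Q P.rep := by
  rw [onTangentLine_iff_eval_polar, eval_polar, ← Projectivization.orthogonal_mk P.rep_nonzero,
    P.mk_rep]
  exact ofField.mem_iff _ _

theorem TangentFilling.ncard_mul_ncard_sub_one_le [Fintype K] (hfill : TangentFilling F)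
    (hF : F.IsHomogeneous d) (hirr : Irreducible F) (hd : 2 ≤ d)
    (hchar : ∀ n, 0 < n → n ≤ d → (n : K) ≠ 0) :
    ((smoothPoints F).ncard * ((smoothPoints F).ncard - 1) : ℤ) ≤ (d * (d - 1) : ℕ) *
      ((smoothPoints F).ncard * (Fintype.card K + 1) -
        (Fintype.card K ^ 2 + Fintype.card K + 1)) := by
  classical
  have := Fintype.ofFinite (smoothPoints F)
  rw [← Nat.card_coe_set_eq, Nat.card_eq_fintype_card, ← order_projectivization (K := K)]
  refine card_mul_card_sub_one_le_of_forall_incident (P := ℙ K (Fin 3 → K))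
    (ℓ := fun Q : smoothPoints F => SmoothPoint.tangentLine Q.2) (fun P => ?_) fun P => ?_
  · obtain ⟨Q, hQ, hQP⟩ := hfill P.rep P.rep_nonzero
    obtain ⟨c, hc⟩ := Projectivization.exists_smul_eq_mk_rep K Q hQ.1
    have hrep : SmoothPoint F (Projectivization.mk K Q hQ.1).rep := hc ▸ hQ.smul hF c.ne_zero
    refine ⟨⟨Projectivization.mk K Q hQ.1, hrep⟩, ?_⟩
    exact (SmoothPoint.mem_tangentLine_iff hrep P).mpr (hc ▸ hQP.smul hF c)
  · rw [← Fintype.card_subtype]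
    have hpolar := isHomogeneous_polar hF P.rep
    exact card_smoothPoints_le_mul (Q := fun i => i.1.1.rep)
      (fun i j hij => rep_ne_smul_rep (Subtype.coe_injective.ne (Subtype.coe_injective.ne hij)))
      (fun i => i.1.2) hF hirr hpolar
      (not_dvd_of_isHomogeneous_of_lt hF hpolar
        (hfill.polar_ne_zero hF hirr hd hchar P.rep_nonzero) (by omega))
      fun i => onTangentLine_iff_eval_polar.mp ((SmoothPoint.mem_tangentLine_iff _ _).mp i.2)

end TangentLines

section Parameters

theorem sqrt_ratio_polynomial_bound {d θ : ℝ} (hd : 3 ≤ d) (hθ : 2 / 3 ≤ θ)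
    (hsq : (d + 1) * (1 - θ) ^ 2 ≤ 1) :
    ((d ^ 2 - 2 * d + 2) / 2 * θ ^ 2 + 5 / 4 + (d - 1) * (d - 2) / 2) * (d * (d - 1) - 2) + 1 ≤
      θ * (d * (d - 1) ^ 3) := by
  have hquad : (d - 2) * ((d ^ 2 - 2 * d + 2) / 2) * ((d + 1) * (1 - θ) ^ 2) ≤
      (d - 2) * ((d ^ 2 - 2 * d + 2) / 2) :=
    mul_le_of_le_one_right (mul_nonneg (by linarith) (by nlinarith)) hsq
  have hlin : (1 - θ) * (d ^ 2 - 3 * d + 4) ≤ 1 / 3 * (d ^ 2 - 3 * d + 4) :=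
    mul_le_mul_of_nonneg_right (by linarith) (by nlinarith)
  nlinarith [sq_nonneg (d - 57 / 22)]

theorem natSqrt_div_sqrt_bounds {κ d : ℕ} (hd : 3 ≤ d) (hκ : κ = 1 ∨ d < κ) :
    2 / 3 ≤ (κ.sqrt / √κ : ℝ) ∧ (κ.sqrt / √κ : ℝ) ≤ 1 ∧
      ((d : ℝ) + 1) * (1 - κ.sqrt / √κ) ^ 2 ≤ 1 := by
  obtain rfl | hκ := hκ
  · norm_num
  have hκ0 : (0 : ℝ) < κ := by exact_mod_cast (by omega : 0 < κ)
  have hs : 0 < √(κ : ℝ) := Real.sqrt_pos.mpr hκ0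
  have hk : (κ.sqrt : ℝ) ≤ √κ := Real.nat_sqrt_le_real_sqrt
  have hk' : √(κ : ℝ) < κ.sqrt + 1 := Real.real_sqrt_lt_nat_sqrt_succ
  have hk2 : (2 : ℝ) ≤ κ.sqrt := by exact_mod_cast Nat.le_sqrt.mpr (by omega)
  have hdefect : 1 - κ.sqrt / √κ = (√κ - κ.sqrt) / √κ := by field_simp
  refine ⟨(div_le_div_iff₀ three_pos hs).mpr (by linarith), (div_le_one hs).mpr hk, ?_⟩
  rw [hdefect, div_pow, Real.sq_sqrt hκ0.le, ← mul_div_assoc, div_le_one hκ0]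
  have hdκ : (d : ℝ) + 1 ≤ κ := by exact_mod_cast hκ
  have hone : (√κ - κ.sqrt : ℝ) ^ 2 ≤ 1 := pow_le_one₀ (by linarith) (by linarith)
  nlinarith

theorem natSqrt_mul_le_of_le_sqrt_mul {κ : ℕ} {r R : ℝ} (hR : 0 ≤ R) (hr : R ≤ √κ * r) :
    κ.sqrt * R ≤ κ * r :=
  calc κ.sqrt * R ≤ √κ * (√κ * r) :=
        mul_le_mul Real.nat_sqrt_le_real_sqrt hr hR (Real.sqrt_nonneg _)
    _ = κ * r := by rw [← mul_assoc, Real.mul_self_sqrt (Nat.cast_nonneg _)]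

theorem four_mul_add_le_of_le_quadratic {d x : ℕ} (hd : 3 ≤ d)
    (hx : (x : ℝ) ≤ ((d : ℝ) ^ 2 - 2 * d + 2) / 2 + 5 / 4) :
    4 * (x : ℝ) + 2 * (d * (d - 1)) ≤ d * (d - 1) ^ 3 := by
  obtain rfl | hd4 := hd.eq_or_lt
  · have hlt : (x : ℝ) < 4 := hx.trans_lt (by norm_num)
    have hle : (x : ℝ) ≤ 3 := by exact_mod_cast Nat.le_of_lt_succ (by exact_mod_cast hlt)
    norm_num
    linarith
  · have hd4R : (4 : ℝ) ≤ d := by exact_mod_cast hd4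
    have hcube : (d : ℝ) * (d - 1) * 9 ≤ d * (d - 1) * (d - 1) ^ 2 :=
      mul_le_mul_of_nonneg_left (by nlinarith) (by nlinarith)
    nlinarith

/-- Over a field with `κ * r ^ 2` elements, Stepanov's auxiliary form is built from `⌊√κ⌋`
derivatives of `r`-th powers; `StepanovExcess d κ r x` says that `⌊√κ⌋ * r + x` is a suitable
dimension for the coefficient space on a curve of degree `d`. -/
structure StepanovExcess (d κ r x : ℕ) : Prop where
  pos : 0 < x
  quadratic_lt : ((d : ℝ) ^ 2 - 2 * d + 2) / 2 * κ.sqrt ^ 2 + κ / 4 < κ * x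
  four_mul_add_le : 4 * (x : ℝ) + 2 * (d * (d - 1)) ≤ d * (d - 1) ^ 3
  mul_add_one_le :
    ((x : ℝ) + (d - 1) * (d - 2) / 2) * (d * (d - 1) - 2) + 1 ≤ κ.sqrt * r
  sqrt_mul_le : (κ.sqrt : ℝ) * (d * (d - 1) ^ 3) ≤ κ * r

theorem exists_stepanovExcess {d κ r : ℕ} (hd : 3 ≤ d) (hκ : κ = 1 ∨ d < κ)
    (hr : (d : ℝ) * (d - 1) ^ 3 ≤ √κ * r) : ∃ x, StepanovExcess d κ r x := by
  have hdR : (3 : ℝ) ≤ d := by exact_mod_cast hd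
  have hκ0 : (0 : ℝ) < κ := by exact_mod_cast (by omega : 0 < κ)
  obtain ⟨hθ, hθ1, hθsq⟩ := natSqrt_div_sqrt_bounds hd hκ
  have hratio : (κ.sqrt / √κ : ℝ) * √κ = κ.sqrt := div_mul_cancel₀ _ (by positivity)
  set θ : ℝ := κ.sqrt / √κ
  set c : ℝ := ((d : ℝ) ^ 2 - 2 * d + 2) / 2
  have hc : 0 ≤ c := div_nonneg (by nlinarith) two_pos.le
  have hx : ((⌊c * θ ^ 2 + 1 / 4⌋₊ + 1 : ℕ) : ℝ) ≤ c * θ ^ 2 + 5 / 4 := by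
    have hfloor := Nat.floor_le (by positivity : 0 ≤ c * θ ^ 2 + 1 / 4)
    push_cast
    linarith
  have hx' : c * θ ^ 2 + 1 / 4 < (⌊c * θ ^ 2 + 1 / 4⌋₊ + 1 : ℕ) := by
    push_cast
    exact Nat.lt_floor_add_one _
  refine ⟨_, Nat.succ_pos _, ?_, four_mul_add_le_of_le_quadratic hd (hx.trans ?_), ?_,
    natSqrt_mul_le_of_le_sqrt_mul (mul_nonneg (by linarith) (pow_nonneg (by linarith) 3)) hr⟩
  · calc c * κ.sqrt ^ 2 + κ / 4 = κ * (c * θ ^ 2 + 1 / 4) := by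
          rw [← hratio, mul_pow, Real.sq_sqrt hκ0.le]
          ring
      _ < _ := mul_lt_mul_of_pos_left hx' hκ0
  · exact add_le_add_left (mul_le_of_le_one_right hc (pow_le_one₀ (by linarith) hθ1)) _
  · calc _ ≤ (c * θ ^ 2 + 5 / 4 + (d - 1) * (d - 2) / 2) * (d * (d - 1) - 2) + 1 := by
          gcongr
          nlinarith
      _ ≤ θ * (d * (d - 1) ^ 3) := sqrt_ratio_polynomial_bound hdR hθ hθsq
      _ ≤ θ * (√κ * r) := mul_le_mul_of_nonneg_left hr (by linarith)
      _ = κ.sqrt * r := by rw [← mul_assoc, hratio]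

theorem stepanov_count_real {d κ k r x L m : ℝ} (hd : 3 ≤ d) (hk : 0 < k) (hr : 0 < r) (hx : 0 ≤ x)
    (hxκ : (d ^ 2 - 2 * d + 2) / 2 * k ^ 2 + κ / 4 < κ * x)
    (hxd : 4 * x + 2 * (d * (d - 1)) ≤ d * (d - 1) ^ 3)
    (hxr : (x + (d - 1) * (d - 2) / 2) * (d * (d - 1) - 2) + 1 ≤ k * r)
    (hkκ : k * (d * (d - 1) ^ 3) ≤ κ * r) (hL : κ * r ^ 2 ≤ d * r * (L + 1))
    (hm : d * m + 2 ≤ k * r + x + (d - 1) * (d - 2) / 2 + d) :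
    k * (d * (L * r + m) + 1) + d * (d - 2) * r * (k * (k - 1) / 2) <
      (d * L + 1 - (d - 1) * (d - 2) / 2) * (k * r + x) := by
  have hxD : x * (d * (d - 1)) ≤ d * (k * r) := by
    have hgap : 0 ≤ (d - 1) * (d - 2) / 2 * (d * (d - 1) - 2) :=
      mul_nonneg (div_nonneg (mul_nonneg (by linarith) (by linarith)) two_pos.le) (by nlinarith)
    have hlin : x * (d - 1) ≤ x * (d * (d - 1) - 2) :=
      mul_le_mul_of_nonneg_left (by nlinarith) hx
    nlinarith
  have hkx : k * (4 * x + 2 * (d * (d - 1))) ≤ κ * r :=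
    (mul_le_mul_of_nonneg_left hxd hk.le).trans hkκ
  have hmain : 0 < r * (r * (κ * x - (d ^ 2 - 2 * d + 2) / 2 * k ^ 2 - κ / 4)) :=
    mul_pos hr (mul_pos hr (by linarith))
  have hlower : 0 ≤ r * (r * κ / 4 + r * k * d / 2 -
      (x * (d * (d - 1)) / 2 + k * (x + d * (d - 1) / 2))) :=
    mul_nonneg hr.le (by linarith)
  have hmr := mul_le_mul_of_nonneg_left hm (mul_nonneg hk.le hr.le)
  have hLx := mul_le_mul_of_nonneg_left hL hx
  refine lt_of_mul_lt_mul_left ?_ hr.le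
  linarith

theorem cast_choose_two_pred {d : ℕ} (hd : 2 ≤ d) :
    ((d - 1).choose 2 : ℝ) = (d - 1) * (d - 2) / 2 := by
  rw [Nat.cast_choose_two, Nat.cast_pred (by omega), sub_sub, one_add_one_eq_two]

theorem cast_sum_stepanov_conditions {d : ℕ} (hd : 2 ≤ d) (k r L m : ℕ) :
    ((∑ j ∈ Finset.range k, (d * ((L + j * (d - 2)) * r + m) + 1) : ℕ) : ℝ) =
      k * (d * (L * r + m) + 1) + d * (d - 2) * r * (k * (k - 1) / 2) := by
  induction k with
  | zero => simp
  | succ k ih =>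
    rw [Finset.sum_range_succ, Nat.cast_add, ih]
    push_cast [Nat.cast_sub hd]
    ring

namespace StepanovExcess

variable {d κ r x : ℕ}

theorem natSqrt_pos (hx : StepanovExcess d κ r x) (hd : 3 ≤ d) : 0 < κ.sqrt := by
  refine Nat.pos_of_ne_zero fun h => ?_
  have hmul := hx.mul_add_one_le
  have hdR : (3 : ℝ) ≤ d := by exact_mod_cast hd
  have hnonneg : 0 ≤ ((x : ℝ) + (d - 1) * (d - 2) / 2) * (d * (d - 1) - 2) :=
    mul_nonneg (add_nonneg x.cast_nonneg (by nlinarith)) (by nlinarith)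
  rw [h, Nat.cast_zero, zero_mul] at hmul
  linarith

theorem sq_le_natSqrt_mul (hx : StepanovExcess d κ r x) (hd : 3 ≤ d) : d ^ 2 ≤ κ.sqrt * r := by
  have hdR : (3 : ℝ) ≤ d := by exact_mod_cast hd
  have hxR : (1 : ℝ) ≤ x := by exact_mod_cast hx.pos
  have hlower : 2 * ((d : ℝ) * (d - 1) - 2) ≤
      (x + (d - 1) * (d - 2) / 2) * (d * (d - 1) - 2) :=
    mul_le_mul_of_nonneg_right (by nlinarith) (by nlinarith)
  have hsq : (d : ℝ) ^ 2 ≤ κ.sqrt * r := by nlinarith [hx.mul_add_one_le]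
  exact_mod_cast hsq

theorem sq_lt_mul (hx : StepanovExcess d κ r x) (hd : 3 ≤ d) : d ^ 2 < κ * r := by
  have hdR : (3 : ℝ) ≤ d := by exact_mod_cast hd
  have hsq : (d : ℝ) ^ 2 < κ * r :=
    calc (d : ℝ) ^ 2 < (d : ℝ) * (d - 1) * 2 ^ 2 := by nlinarith
      _ ≤ (d : ℝ) * (d - 1) * (d - 1) ^ 2 :=
        mul_le_mul_of_nonneg_left (by gcongr; linarith) (by nlinarith)
      _ = (d : ℝ) * (d - 1) ^ 3 := by ring
      _ ≤ (κ.sqrt : ℝ) * (d * (d - 1) ^ 3) :=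
        le_mul_of_one_le_left (mul_nonneg d.cast_nonneg (pow_nonneg (by linarith) 3))
          (by exact_mod_cast hx.natSqrt_pos hd)
      _ ≤ (κ : ℝ) * r := hx.sqrt_mul_le
  exact_mod_cast hsq

theorem count (hx : StepanovExcess d κ r x) (hd : 3 ≤ d) (hr : 0 < r) {L m : ℕ}
    (hL : κ * r ^ 2 ≤ d * r * (L + 1)) (hdL : d ≤ L)
    (hm : d * m + 2 ≤ κ.sqrt * r + x + (d - 1).choose 2 + d) :
    ∑ j ∈ Finset.range κ.sqrt, (d * ((L + j * (d - 2)) * r + m) + 1) <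
      (d * L + 1 - (d - 1).choose 2) * (κ.sqrt * r + x) := by
  have hg := cast_choose_two_pred (by omega : 2 ≤ d)
  have hgL : (d - 1).choose 2 ≤ d * L + 1 :=
    calc (d - 1).choose 2 ≤ (d - 1) ^ 2 := Nat.choose_le_pow _ _
      _ ≤ d ^ 2 := Nat.pow_le_pow_left (Nat.sub_le _ _) _
      _ ≤ d * L + 1 := by nlinarith
  have hreal := stepanov_count_real (L := L) (m := m) (by exact_mod_cast hd : (3 : ℝ) ≤ d)
    (Nat.cast_pos.mpr (hx.natSqrt_pos hd)) (Nat.cast_pos.mpr hr) x.cast_nonneg hx.quadratic_lt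
    hx.four_mul_add_le hx.mul_add_one_le hx.sqrt_mul_le (by exact_mod_cast hL)
    (by rw [← hg]; exact_mod_cast hm)
  rw [← cast_sum_stepanov_conditions (by omega), ← hg] at hreal
  rw [← Nat.cast_lt (α := ℝ)]
  push_cast [Nat.cast_sub hgL] at hreal ⊢
  exact hreal

end StepanovExcess

theorem exists_le_mul_lt_le_mul_succ {a n q : ℕ} (hn : 0 < n) (hq : n * a < q) :
    ∃ L, a ≤ L ∧ n * L < q ∧ q ≤ n * (L + 1) := by
  have hlower := Nat.mul_div_le (q - 1) n
  have hupper := Nat.lt_mul_div_succ (q - 1) hn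
  refine ⟨(q - 1) / n, ?_, by omega, by omega⟩
  rw [Nat.le_div_iff_mul_le hn, mul_comm]
  omega

theorem exists_le_mul_eq_add {a d B : ℕ} (hd : 0 < d) (hB : d * a ≤ B) :
    ∃ m e, a ≤ m ∧ e < d ∧ d * m = B + e := by
  have hlower := Nat.mul_div_le (B + d - 1) d
  have hupper := Nat.lt_mul_div_succ (B + d - 1) hd
  rw [mul_add_one] at hupper
  refine ⟨(B + d - 1) / d, d * ((B + d - 1) / d) - B, ?_, by omega, by omega⟩
  rw [Nat.le_div_iff_mul_le hd, mul_comm]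
  omega

theorem StepanovExcess.exists_degrees {d κ r x : ℕ} (hx : StepanovExcess d κ r x) (hd : 3 ≤ d)
    (hr : 0 < r) : ∃ L m e, d ≤ L ∧ d ≤ m ∧ d * L * r < κ * r ^ 2 ∧
      d * m + 1 = κ.sqrt * r + x + (d - 1).choose 2 + e ∧
      ∑ j ∈ Finset.range κ.sqrt, (d * ((L + j * (d - 2)) * r + m) + 1) <
        (d * L + 1 - (d - 1).choose 2) * (d * m + 1 - (d - 1).choose 2 - e) := by
  have hx0 := hx.pos
  have hdk := hx.sq_le_natSqrt_mul hd
  obtain ⟨L, hdL, hLq, hqL⟩ : ∃ L, d ≤ L ∧ d * r * L < κ * r ^ 2 ∧ κ * r ^ 2 ≤ d * r * (L + 1) :=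
    exists_le_mul_lt_le_mul_succ (by positivity) (by nlinarith [hx.sq_lt_mul hd])
  obtain ⟨m, e, hdm, hed, hm⟩ : ∃ m e, d ≤ m ∧ e < d ∧
      d * m = κ.sqrt * r + (x - 1) + (d - 1).choose 2 + e :=
    exists_le_mul_eq_add (by omega) (by rw [← sq]; omega)
  refine ⟨L, m, e, hdL, hdm, by rwa [mul_right_comm], by omega, ?_⟩
  rw [show d * m + 1 - (d - 1).choose 2 - e = κ.sqrt * r + x by omega]
  exact hx.count hd hr hqL hdL (by omega)

end Parameters

section PointCount

variable {K : Type*} [Field K] [Fintype K] {F : MvPolynomial (Fin 3) K} {d : ℕ}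

theorem ncard_affine_sub_one_mul_lt {p : ℕ} [Fact p.Prime] [CharP K p] (hF : F.IsHomogeneous d)
    (hirr : Irreducible F) (hd : 3 ≤ d) {κ μ x : ℕ} (hcard : Fintype.card K = κ * (p ^ μ) ^ 2)
    (hκp : κ ≤ p) (hx : StepanovExcess d κ (p ^ μ) x)
    (hS : {P ∈ smoothPoints F | P.rep 2 ≠ 0}.Nonempty) :
    ({P ∈ smoothPoints F | P.rep 2 ≠ 0}.ncard - 1) * (κ.sqrt * p ^ μ) <
      Fintype.card K * (κ.sqrt * p ^ μ + x + (d - 1).choose 2) := by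
  let := Fintype.ofFinite {P ∈ smoothPoints F | P.rep 2 ≠ 0}
  have := hS.to_subtype
  obtain ⟨L, m, e, hdL, hdm, hLq, hm, hcount⟩ :=
    hx.exists_degrees hd (pow_pos (Fact.out : p.Prime).pos μ)
  rw [← hcard] at hLq
  have hbezout := card_sub_one_mul_add_le hF hirr (by omega)
    (Q := fun P : {P ∈ smoothPoints F | P.rep 2 ≠ 0} => P.1.rep)
    (fun P Q hPQ => rep_ne_smul_rep (Subtype.coe_injective.ne hPQ)) (fun P => P.2.1)
    (fun P => P.2.2) hdL hdm ((Nat.sqrt_le_self κ).trans hκp)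
    (hcard ▸ Nat.mul_le_mul (Nat.sqrt_le_self κ) (Nat.le_self_pow two_ne_zero _)) hLq hcount
  rw [← Nat.card_eq_fintype_card, Nat.card_coe_set_eq] at hbezout
  nlinarith [congrArg (Fintype.card K * ·) hm]

end PointCount

section Estimates

theorem mul_cube_le_sqrt_mul {d κ r : ℕ} (hd : 1 ≤ d) (hq : d ^ 2 * (d - 1) ^ 6 ≤ κ * r ^ 2) :
    (d : ℝ) * (d - 1) ^ 3 ≤ √κ * r := by
  rw [← Nat.cast_pred hd]
  calc ((d : ℝ) * (d - 1 : ℕ) ^ 3) ≤ √(κ * r ^ 2) :=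
        Real.le_sqrt_of_sq_le (by rw [mul_pow, ← pow_mul]; exact_mod_cast hq)
    _ = √κ * r := by rw [Real.sqrt_mul κ.cast_nonneg, Real.sqrt_sq r.cast_nonneg]

theorem mul_sub_two_add_le_of_sub_one_mul_le {D R N S T q t c : ℝ} (hD : 2 ≤ D) (hT : 0 < T)
    (hq : 0 ≤ q) (ht : t * (D - 2) + 1 ≤ T) (hRT : R * T ≤ q)
    (hS : (S - 1) * T ≤ q * (T + t)) (hN : N ≤ S + c) (hR : (D - 2) * (c + 1) + D ≤ R) :
    (D - 2) * N + D ≤ (D - 1) * q := by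
  refine le_of_mul_le_mul_right ?_ hT
  have hN' := mul_le_mul_of_nonneg_left hN (sub_nonneg.mpr hD)
  calc ((D - 2) * N + D) * T ≤ ((D - 2) * (S - 1) + R) * T :=
        mul_le_mul_of_nonneg_right (by linarith) hT.le
    _ = (D - 2) * ((S - 1) * T) + R * T := by ring
    _ ≤ (D - 2) * (q * (T + t)) + q :=
        add_le_add (mul_le_mul_of_nonneg_left hS (sub_nonneg.mpr hD)) hRT
    _ = (D - 2) * q * T + q * (t * (D - 2) + 1) := by ring
    _ ≤ (D - 2) * q * T + q * T := by gcongr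
    _ = (D - 1) * q * T := by ring

theorem mul_sub_lt_mul_pred_of_le {D N q : ℝ} (hD : 6 ≤ D) (hq : 0 ≤ q)
    (hN : (D - 2) * N + D ≤ (D - 1) * q) :
    D * (N * (q + 1) - (q ^ 2 + q + 1)) < N * (N - 1) := by
  have hdecreasing : 0 ≤ ((D - 1) * q - D - (D - 2) * N) *
      ((D - 2) * (1 + D * (q + 1)) - (D - 2) * N - ((D - 1) * q - D)) :=
    mul_nonneg (by linarith) (by nlinarith [mul_nonneg hq (by nlinarith : 0 ≤ D ^ 2 - 4 * D + 2)])
  have hboundary : 0 < q ^ 2 + (D - 1) * (D ^ 2 - 5 * D + 2) * q +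
      (D ^ 2 + (D - 2) * D * (1 + D) + D * (D - 2) ^ 2) := by
    have : 0 ≤ (D - 1) * (D ^ 2 - 5 * D + 2) := mul_nonneg (by linarith) (by nlinarith)
    have : 0 ≤ D - 2 := by linarith
    positivity
  rw [← sub_pos]
  refine pos_of_mul_pos_right ?_ (sq_nonneg (D - 2))
  linarith

theorem two_mul_sub_lt_mul_pred {N q : ℤ} (hq : 2 ≤ q) :
    2 * (N * (q + 1) - (q ^ 2 + q + 1)) < N * (N - 1) := by
  nlinarith [sq_nonneg (2 * N - (2 * q + 3))]

theorem exists_card_eq_mul_pow_sq (K : Type*) [Field K] [Fintype K] (p : ℕ) [CharP K p] :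
    ∃ κ μ, Fintype.card K = κ * (p ^ μ) ^ 2 ∧ (κ = 1 ∨ κ = p) := by
  obtain ⟨n, -, hn⟩ := FiniteField.card K p
  obtain ⟨μ, hμ | hμ⟩ := Nat.even_or_odd' n
  · exact ⟨1, μ, by rw [hn, hμ]; ring, .inl rfl⟩
  · exact ⟨p, μ, by rw [hn, hμ]; ring, .inr rfl⟩

variable {K : Type*} [Field K] [Fintype K] {F : MvPolynomial (Fin 3) K} {d : ℕ}

theorem mul_ncard_smoothPoints_add_le {p : ℕ} [Fact p.Prime] [CharP K p] (hF : F.IsHomogeneous d)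
    (hirr : Irreducible F) (hd : 3 ≤ d) (hdp : d < p)
    (hq : d ^ 2 * (d - 1) ^ 6 ≤ Fintype.card K) :
    ((d : ℝ) * (d - 1) - 2) * (smoothPoints F).ncard + d * (d - 1) ≤
      (d * (d - 1) - 1) * Fintype.card K := by
  obtain ⟨κ, μ, hcard, hκ⟩ := exists_card_eq_mul_pow_sq K p
  obtain ⟨x, hx⟩ : ∃ x, StepanovExcess d κ (p ^ μ) x :=
    exists_stepanovExcess hd (by omega) (mul_cube_le_sqrt_mul (by omega) (hcard ▸ hq))
  have hp : 0 < p := (Fact.out : p.Prime).pos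
  have hdR : (3 : ℝ) ≤ d := by exact_mod_cast hd
  have hg : (0 : ℝ) ≤ (d - 1) * (d - 2) / 2 := by nlinarith
  refine mul_sub_two_add_le_of_sub_one_mul_le (R := d * (d - 1) ^ 3) (c := d)
    (S := {P ∈ smoothPoints F | P.rep 2 ≠ 0}.ncard) (T := κ.sqrt * (p ^ μ : ℕ))
    (t := x + (d - 1) * (d - 2) / 2) (by nlinarith)
    (mul_pos (by exact_mod_cast hx.natSqrt_pos hd) (by positivity)) (Nat.cast_nonneg _)
    hx.mul_add_one_le ?_ ?_
    (by exact_mod_cast ncard_smoothPoints_le_ncard_affine_add hF hirr (by omega)) ?_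
  · calc (d : ℝ) * (d - 1) ^ 3 * (κ.sqrt * (p ^ μ : ℕ))
        = (κ.sqrt : ℝ) * (d * (d - 1) ^ 3) * (p ^ μ : ℕ) := by ring
      _ ≤ (κ : ℝ) * (p ^ μ : ℕ) * (p ^ μ : ℕ) :=
        mul_le_mul_of_nonneg_right hx.sqrt_mul_le (Nat.cast_nonneg _)
      _ = Fintype.card K := by rw [hcard]; push_cast; ring
  · obtain hS | hS := {P ∈ smoothPoints F | P.rep 2 ≠ 0}.eq_empty_or_nonempty
    · rw [hS, Set.ncard_empty, Nat.cast_zero, zero_sub, neg_one_mul]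
      exact (neg_nonpos.mpr (by positivity)).trans (by positivity)
    · have hlt := ncard_affine_sub_one_mul_lt hF hirr hd hcard (by omega) hx hS
      rw [← Nat.cast_pred ((Set.ncard_pos (Set.toFinite _)).mpr hS), ← add_assoc,
        ← cast_choose_two_pred (by omega)]
      exact_mod_cast hlt.le
  · have : 0 ≤ (d : ℝ) - 3 := by linarith
    nlinarith [mul_nonneg this this, mul_nonneg (mul_nonneg this this) this,
      sq_nonneg (((d : ℝ) - 3) ^ 2)]

end Estimates

theorem low_degree_not_tangent_filling
    (K : Type*) [Field K] [Fintype K] (d : ℕ) (hd : 2 ≤ d)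
    (F : MvPolynomial (Fin 3) K) (hF : F.IsHomogeneous d)
    (hirr : Irreducible F)
    (hpd : d < ringChar K)
    (hq : d ^ 2 * (d - 1) ^ 6 ≤ Fintype.card K) :
    ¬ TangentFilling F := by
  intro hfill
  have : Fact (ringChar K).Prime := ⟨CharP.char_is_prime K (ringChar K)⟩
  have hchar (n : ℕ) (hn : 0 < n) (hnd : n ≤ d) : (n : K) ≠ 0 := fun h =>
    (hnd.trans_lt hpd).not_ge (Nat.le_of_dvd hn (ringChar.dvd h))
  have hupper := hfill.ncard_mul_ncard_sub_one_le hF hirr hd hchar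
  obtain rfl | hd3 := hd.eq_or_lt
  · exact hupper.not_gt (two_mul_sub_lt_mul_pred (by exact_mod_cast Fintype.one_lt_card (α := K)))
  · have hcount := mul_ncard_smoothPoints_add_le hF hirr hd3 hpd hq
    have hd3R : (3 : ℝ) ≤ d := by exact_mod_cast hd3
    have hlower := mul_sub_lt_mul_pred_of_le (by nlinarith) (Nat.cast_nonneg _) hcount
    rw [← Nat.cast_pred (by omega)] at hlower
    exact hupper.not_gt (by exact_mod_cast hlower)
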